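/- arXiv:1605.00978 — 4 statements merged into one kernel-verified Lean document; each statement's English description precedes it below -/
import Mathlib

section
/- Let 𝒟 = (D_0,…,D_m) be a D-flag of length m with gaps g_1 < … < g_m, let 𝓜_top be a standard module with D_{𝓜_top} = D_m satisfying dim_ℂ(𝓜̄^{(g_i)}/𝓜̄^{(g_i+1)}) = 1 for all 1 ≤ i ≤ m (where 𝓜̄ = 𝓜_top/𝔪𝓜_top and 𝓜̄^{(j)} is the image of 𝓜_top ∩ z^j𝒪 in 𝓜̄), let 𝓜̄_0 ⊆ 𝓜̄ be a ℂ-subspace with dim_ℂ(𝓜̄/𝓜̄_0) = m, dim_ℂ((𝓜̄_0 + 𝓜̄^{(g_i)})/(𝓜̄_0 + 𝓜̄^{(g_i+1)})) = 1 for all i, and 𝓜̄_0 ⊄ 𝓜̄^{(1)}, and let 𝓜_0 be the unique ℛ-submodule with 𝔪𝓜_top ⊆ 𝓜_0 ⊆ 𝓜_top whose image in 𝓜̄ is 𝓜̄_0. Then the set of flags of standard modules 𝓜_0 ⊆ 𝓜_1 ⊆ … ⊆ 𝓜_m = 𝓜_top (with the given 𝓜_0 and 𝓜_m) satisfying D_{𝓜_i}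 = D_i for all i is in bijection with the group of m×m upper-triangular complex matrices with all diagonal entries equal to 1; in particular it is in bijection with ℂ^{m(m−1)/2}. -/
open PowerSeries

noncomputable section

/-- `𝒪 = ℂ⟦z⟧`, the ring of formal power series over `ℂ`. -/
abbrev 𝒪 : Type := PowerSeries ℂ

/-- `ν(f)`: the order of a power series (least `n` with nonzero coefficient);
only meaningful for `f ≠ 0`. -/
noncomputable def ord (f : 𝒪) : ℕ := sInf {n : ℕ | PowerSeries.coeff n f ≠ 0}

/-- The value semigroup `Γ = {ν(x) : 0 ≠ x ∈ ℛ}` of a subalgebra `ℛ ⊆ 𝒪`. -/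
def SGamma (R : Subalgebra ℂ 𝒪) : Set ℕ := {n | ∃ x ∈ R, x ≠ (0:𝒪) ∧ ord x = n}

/-- The set of gaps `G = ℕ ∖ Γ`. -/
def Gaps (R : Subalgebra ℂ 𝒪) : Set ℕ := (SGamma R)ᶜ

/-- `Δ` is a `Γ`-module: `Γ + Δ ⊆ Δ`. -/
def IsGammaModule (Γ Δ : Set ℕ) : Prop := ∀ a ∈ Γ, ∀ d ∈ Δ, a + d ∈ Δ

/-- `Δ_𝓜 = {ν(x) : 0 ≠ x ∈ 𝓜}` for an `ℛ`-submodule `𝓜 ⊆ 𝒪`. -/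
def DeltaM (R : Subalgebra ℂ 𝒪) (M : Submodule ↥R 𝒪) : Set ℕ :=
  {n | ∃ x ∈ M, x ≠ (0:𝒪) ∧ ord x = n}

/-- `D_𝓜 = Δ_𝓜 ∩ G`, the set of added gaps. -/
def Dset (R : Subalgebra ℂ 𝒪) (M : Submodule ↥R 𝒪) : Set ℕ := DeltaM R M ∩ Gaps R

/-- A standard module: a finitely generated `ℛ`-submodule of `𝒪` containing an
element of order `0`. -/
def IsStd (R : Subalgebra ℂ 𝒪) (M : Submodule ↥R 𝒪) : Prop :=
  M.FG ∧ ∃ x ∈ M, x ≠ (0:𝒪) ∧ ord x = 0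

/-- `c ≥ 1` is the conductor of `ℛ`: the minimal exponent with `z^c𝒪 ⊆ ℛ`. -/
def HasConductor (R : Subalgebra ℂ 𝒪) (c : ℕ) : Prop :=
  1 ≤ c ∧ (∀ f : 𝒪, (PowerSeries.X : 𝒪)^c * f ∈ R) ∧
    ∀ c' : ℕ, (∀ f : 𝒪, (PowerSeries.X : 𝒪)^c' * f ∈ R) → c ≤ c'

/-- `z^j𝒪` as a `ℂ`-submodule of `𝒪`. -/
def zO (j : ℕ) : Submodule ℂ 𝒪 :=
  LinearMap.range (LinearMap.mulLeft ℂ ((PowerSeries.X : 𝒪)^j))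

/-- `𝔪𝓜` as a `ℂ`-submodule of `𝒪`, where `𝔪 = {x ∈ ℛ : x = 0 or ν(x) > 0}`
is the maximal ideal of `ℛ`. -/
def mSmul (R : Subalgebra ℂ 𝒪) (M : Submodule ↥R 𝒪) : Submodule ℂ 𝒪 :=
  Submodule.span ℂ {z : 𝒪 | ∃ r ∈ (R : Set 𝒪), ∃ y ∈ M, (r = 0 ∨ 0 < ord r) ∧ z = r * y}

/-- `dim_ℂ (A / B)` for `ℂ`-subspaces; intended for `B ≤ A`. -/
noncomputable def quotDim (A B : Submodule ℂ 𝒪) : ℕ :=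
  Module.finrank ℂ (↥A ⧸ Submodule.comap A.subtype B)

/-- `D_i = D_0 ∪ {g_1, …, g_i}` (the gaps `g` are indexed by `1, …, m`). -/
def DFlagSet (D0 : Set ℕ) (g : ℕ → ℕ) (i : ℕ) : Set ℕ := D0 ∪ g '' Set.Icc 1 i

/-- `(D_0, …, D_m)` with `D_i = D_0 ∪ {g_1 < … < g_i}` is a `D`-flag:
all `Δ_i = Γ ∪ D_i` are `Γ`-modules. -/
def IsDFlag (R : Subalgebra ℂ 𝒪) (m : ℕ) (D0 : Set ℕ) (g : ℕ → ℕ) : Prop :=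
  D0 ⊆ Gaps R ∧ StrictMonoOn g (Set.Icc 1 m) ∧
  (∀ i, 1 ≤ i → i ≤ m → g i ∈ Gaps R \ D0) ∧
  (∀ i ≤ m, IsGammaModule (SGamma R) (SGamma R ∪ DFlagSet D0 g i))

/-- A `D`-flag is admissible if it is realized by a flag of standard modules. -/
def IsAdmissibleFlag (R : Subalgebra ℂ 𝒪) (m : ℕ) (D0 : Set ℕ) (g : ℕ → ℕ) : Prop :=
  ∃ MM : ℕ → Submodule ↥R 𝒪, (∀ i, i < m → MM i ≤ MM (i+1)) ∧
    ∀ i ≤ m, IsStd R (MM i) ∧ Dset R (MM i) = DFlagSet D0 g i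

/-- The subalgebra `ℂ[z^a, z^b + z^c] + z^N ℂ⟦z⟧` of `𝒪`. -/
def Rring (a b c N : ℕ) : Subalgebra ℂ 𝒪 where
  carrier := {f : 𝒪 | ∃ p ∈ Algebra.adjoin ℂ
      ({(PowerSeries.X : 𝒪)^a, (PowerSeries.X : 𝒪)^b + (PowerSeries.X : 𝒪)^c} : Set 𝒪),
    ∃ g : 𝒪, f = p + (PowerSeries.X : 𝒪)^N * g}
  mul_mem' := by
    rintro x y ⟨p, hp, gx, rfl⟩ ⟨q, hq, gy, rfl⟩
    exact ⟨p * q, mul_mem hp hq,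
      p * gy + gx * q + (PowerSeries.X : 𝒪)^N * (gx * gy), by ring⟩
  one_mem' := ⟨1, one_mem _, 0, by ring⟩
  add_mem' := by
    rintro x y ⟨p, hp, gx, rfl⟩ ⟨q, hq, gy, rfl⟩
    exact ⟨p + q, add_mem hp hq, gx + gy, by ring⟩
  zero_mem' := ⟨0, zero_mem _, 0, by ring⟩
  algebraMap_mem' := fun r => ⟨algebraMap ℂ 𝒪 r, Subalgebra.algebraMap_mem _ r, 0, by ring⟩

/-- The ring `ℂ⟦z^4, z^{2u}+z^v⟧ = ℂ[z^4, z^{2u}+z^v] + z^{4u+v}ℂ⟦z⟧` for the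
plane curve singularity with Puiseux exponents `(4, 2u, v)`. -/
def Rcal (u v : ℕ) : Subalgebra ℂ 𝒪 := Rring 4 (2*u) v (4*u+v)

/-- The gap counting function `γ_Δ(ℓ) = |[ℓ,∞) ∖ Δ|`. -/
noncomputable def gapCount (Δ : Set ℕ) (ℓ : ℕ) : ℕ := Set.ncard {k : ℕ | ℓ ≤ k ∧ k ∉ Δ}

/-- `n = n(D)`: the smallest odd number in `(Δ ∪ {v}) ∩ [2u, ∞)`. -/
noncomputable def nOdd (u v : ℕ) (Δ : Set ℕ) : ℕ :=
  sInf {k : ℕ | Odd k ∧ 2*u ≤ k ∧ (k ∈ Δ ∨ k = v)}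

/-- The dimension change `μ_{D,g}` of Theorem `dimprop` (for the family `(4,2u,v)`),
where `Γ` is the value semigroup. -/
noncomputable def muDim (u v : ℕ) (Γ : Set ℕ) (D : Set ℕ) (gp : ℕ) : ℕ :=
  let Δ : Set ℕ := Γ ∪ D
  let Δ' : Set ℕ := Δ ∪ {gp}
  let n : ℕ := nOdd u v Δ
  if gp % 4 = 2 then
    (gapCount Δ' gp - gapCount Δ' (gp+4)) - (gapCount Δ' (gp+n) - gapCount Δ' (gp+4+n))
  else gapCount Δ' gp - gapCount Δ' (gp+4)


/-- Flags of standard modules `𝓜_0 ⊆ 𝓜_1 ⊆ … ⊆ 𝓜_m = 𝓜_top` realizing the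
`D`-flag `(D_0,…,D_m)`, with prescribed ends `𝓜_0` and `𝓜_m = 𝓜_top`. -/
def FlagsBetween (R : Subalgebra ℂ 𝒪) (m : ℕ) (D0 : Set ℕ) (g : ℕ → ℕ)
    (M0 Mtop : Submodule ↥R 𝒪) : Type :=
  {MM : Fin (m+1) → Submodule ↥R 𝒪 //
    (∀ i : Fin m, MM i.castSucc ≤ MM i.succ) ∧ MM 0 = M0 ∧ MM (Fin.last m) = Mtop ∧
    ∀ i : Fin (m+1), IsStd R (MM i) ∧ Dset R (MM i) = DFlagSet D0 g (i : ℕ)}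


/-! ### Linear algebra in `ℂ^m` -/

/-- `k` is the leading index of the vector `a`. -/
def LeadIdx {m : ℕ} (a : Fin m → ℂ) (k : Fin m) : Prop := (∀ l < k, a l = 0) ∧ a k ≠ 0

lemma exists_leadIdx {m : ℕ} (a : Fin m → ℂ) (ha : a ≠ 0) : ∃ k, LeadIdx a k := by
  have h : ∃ k, a k ≠ 0 := by
    by_contra h
    push Not at h
    exact ha (funext h)
  obtain ⟨k, hk, hmin⟩ := WellFounded.has_min (wellFounded_lt (α := Fin m)) {k | a k ≠ 0} h
  refine ⟨k, fun l hl => ?_, hk⟩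
  by_contra h0
  exact hmin l h0 hl

/-- Upper unitriangular matrices. -/
def UniTri (m : ℕ) : Type := {A : Matrix (Fin m) (Fin m) ℂ // (∀ i j : Fin m, j < i → A i j = 0) ∧
        ∀ i : Fin m, A i i = 1}

/-- Flags in `ℂ^m` opposite to the standard flag. -/
def FlagC (m : ℕ) : Type := {U : Fin (m+1) → Submodule ℂ (Fin m → ℂ) //
  (∀ i : Fin m, U i.castSucc ≤ U i.succ) ∧ U 0 = ⊥ ∧ U (Fin.last m) = ⊤ ∧
    ∀ (i : Fin (m+1)) (k : Fin m), (∃ w ∈ U i, LeadIdx w k) ↔ (k : ℕ) < i}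

lemma lead_vecMul {m : ℕ} (A : Matrix (Fin m) (Fin m) ℂ) (h1 : ∀ i j : Fin m, j < i → A i j = 0)
    (h2 : ∀ i : Fin m, A i i = 1) (c : Fin m → ℂ) (k : Fin m) (hc : LeadIdx c k) :
    LeadIdx (Matrix.vecMul c A) k := by
  constructor
  · intro l hl
    simp only [Matrix.vecMul, dotProduct]
    refine Finset.sum_eq_zero fun i _ => ?_
    rcases lt_or_ge i k with h | h
    · rw [hc.1 i h, zero_mul]
    · rw [h1 i l (lt_of_lt_of_le hl h), mul_zero]
  · simp only [Matrix.vecMul, dotProduct]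
    rw [Finset.sum_eq_single k]
    · rw [h2, mul_one]; exact hc.2
    · intro i _ hik
      rcases lt_or_gt_of_ne hik with h | h
      · rw [hc.1 i h, zero_mul]
      · rw [h1 i k h, mul_zero]
    · simp

lemma leadIdx_unique {m : ℕ} {a : Fin m → ℂ} {k l : Fin m} (h : LeadIdx a k) (h' : LeadIdx a l) :
    k = l := by
  rcases lt_trichotomy k l with hh | hh | hh
  · exact absurd (h'.1 k hh) h.2
  · exact hh
  · exact absurd (h.1 l hh) h'.2

lemma uniTri_det {m : ℕ} (A : Matrix (Fin m) (Fin m) ℂ) (h1 : ∀ i j : Fin m, j < i → A i j = 0)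
    (h2 : ∀ i : Fin m, A i i = 1) : IsUnit A.det := by
  have : A.det = 1 := by
    rw [Matrix.det_of_isUpperTriangular (fun i j h => h1 i j h)]
    simp [h2]
  rw [this]; exact isUnit_one

lemma flagC_mono {m : ℕ} (U : FlagC m) : Monotone U.1 := Fin.monotone_iff_le_succ.2 U.2.1

lemma flagC_exists {m : ℕ} (U : FlagC m) : ∃ A : UniTri m, ∀ i, A.1 i ∈ U.1 i.succ := by
  have h : ∀ i : Fin m, ∃ w ∈ U.1 i.succ, (∀ l < i, w l = 0) ∧ w i = 1 := by
    intro i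
    obtain ⟨w, hw, hl, hn⟩ := (U.2.2.2.2 i.succ i).2 (by simp)
    refine ⟨(w i)⁻¹ • w, Submodule.smul_mem _ _ hw, fun l hl' => by simp [hl l hl'], by simp [hn]⟩
  choose w hw hl h1 using h
  exact ⟨⟨w, fun i j hij => hl i j hij, h1⟩, hw⟩

lemma flagC_unique {m : ℕ} (U : FlagC m) (A B : UniTri m) (hA : ∀ i, A.1 i ∈ U.1 i.succ)
    (hB : ∀ i, B.1 i ∈ U.1 i.succ) : A = B := by
  apply Subtype.ext
  funext i
  by_contra hne
  obtain ⟨k, hk⟩ := exists_leadIdx (A.1 i - B.1 i) (sub_ne_zero.2 hne)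
  have := (U.2.2.2.2 i.succ k).1 ⟨_, Submodule.sub_mem _ (hA i) (hB i), hk⟩
  have hki : k ≤ i := by
    simp only [Fin.val_succ] at this
    exact Fin.le_def.2 (by omega)
  apply hk.2
  rcases hki.lt_or_eq with h | h
  · simp [A.2.1 i k h, B.2.1 i k h]
  · subst h; simp [A.2.2, B.2.2]

/-- The subspace spanned by the first `i` rows of `A`. -/
def rowFlag {m : ℕ} (A : Matrix (Fin m) (Fin m) ℂ) (i : Fin (m+1)) :
    Submodule ℂ (Fin m → ℂ) where
  carrier := {w | ∃ c : Fin m → ℂ, (∀ l : Fin m, (i : ℕ) ≤ l → c l = 0) ∧ w = Matrix.vecMul c A}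
  add_mem' := by
    rintro _ _ ⟨c, hc, rfl⟩ ⟨d, hd, rfl⟩
    exact ⟨c + d, fun l hl => by simp [hc l hl, hd l hl], by rw [Matrix.add_vecMul]⟩
  zero_mem' := ⟨0, fun _ _ => rfl, by simp⟩
  smul_mem' := by
    rintro r _ ⟨c, hc, rfl⟩
    exact ⟨r • c, fun l hl => by simp [hc l hl], by rw [Matrix.smul_vecMul]⟩

lemma mem_rowFlag {m : ℕ} (A : Matrix (Fin m) (Fin m) ℂ) (i : Fin (m+1)) (w : Fin m → ℂ) :
    w ∈ rowFlag A i ↔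
      ∃ c : Fin m → ℂ, (∀ l : Fin m, (i : ℕ) ≤ l → c l = 0) ∧ w = Matrix.vecMul c A := Iff.rfl

lemma exists_vecMul {m : ℕ} (A : UniTri m) (w : Fin m → ℂ) : ∃ c, w = Matrix.vecMul c A.1 := by
  refine ⟨Matrix.vecMul w A.1⁻¹, ?_⟩
  rw [Matrix.vecMul_vecMul, Matrix.nonsing_inv_mul _ (uniTri_det A.1 A.2.1 A.2.2), Matrix.vecMul_one]

lemma row_mem_rowFlag {m : ℕ} (A : Matrix (Fin m) (Fin m) ℂ) (i : Fin (m+1)) (k : Fin m)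
    (h : (k : ℕ) < i) : A k ∈ rowFlag A i := by
  refine ⟨Pi.single k 1, fun l hl => ?_, ?_⟩
  · rw [Pi.single_eq_of_ne]
    rintro rfl
    omega
  · rw [Matrix.single_one_vecMul]; rfl

lemma rowFlag_isFlag {m : ℕ} (A : UniTri m) :
    (∀ i : Fin m, rowFlag A.1 i.castSucc ≤ rowFlag A.1 i.succ) ∧ rowFlag A.1 0 = ⊥ ∧
    rowFlag A.1 (Fin.last m) = ⊤ ∧
    ∀ (i : Fin (m+1)) (k : Fin m), (∃ w ∈ rowFlag A.1 i, LeadIdx w k) ↔ (k : ℕ) < i := by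
  refine ⟨?_, ?_, ?_, ?_⟩
  · rintro i _ ⟨c, hc, rfl⟩
    refine ⟨c, fun l hl => hc l ?_, rfl⟩
    simp only [Fin.val_succ, Fin.val_castSucc] at *
    omega
  · rw [eq_bot_iff]
    rintro _ ⟨c, hc, rfl⟩
    have : c = 0 := funext fun l => hc l (by simp)
    simp [this]
  · rw [eq_top_iff]
    intro w _
    obtain ⟨c, hc⟩ := exists_vecMul A w
    refine ⟨c, fun l hl => ?_, hc⟩
    have := l.2
    simp only [Fin.val_last] at hl
    omega
  · intro i k
    constructor
    · rintro ⟨_, ⟨c, hc, rfl⟩, hk⟩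
      by_contra hlt
      have hc0 : c ≠ 0 := by
        rintro rfl
        simp [LeadIdx] at hk
      obtain ⟨l, hl⟩ := exists_leadIdx c hc0
      have := leadIdx_unique hk (lead_vecMul A.1 A.2.1 A.2.2 c l hl)
      subst this
      exact hl.2 (hc _ (by omega))
    · intro h
      exact ⟨A.1 k, row_mem_rowFlag A.1 i k h, fun l hl => A.2.1 k l hl, by simp [A.2.2]⟩

lemma rowFlag_eq {m : ℕ} (A : UniTri m) (U : FlagC m) (hA : ∀ i, A.1 i ∈ U.1 i.succ)
    (i : Fin (m+1)) : U.1 i = rowFlag A.1 i := by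
  have hrow : ∀ k : Fin m, (k : ℕ) < i → A.1 k ∈ U.1 i := fun k hk =>
    flagC_mono U (Fin.le_def.2 (by simp only [Fin.val_succ]; omega)) (hA k)
  have hle : rowFlag A.1 i ≤ U.1 i := by
    rintro _ ⟨c, hc, rfl⟩
    rw [Matrix.vecMul_eq_sum]
    refine Submodule.sum_mem _ fun l _ => ?_
    by_cases hl : (l : ℕ) < i
    · exact Submodule.smul_mem _ _ (hrow l hl)
    · rw [hc l (by omega), zero_smul]; exact Submodule.zero_mem _
  refine le_antisymm ?_ hle
  intro w hw
  obtain ⟨c, rfl⟩ := exists_vecMul A w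
  let d : Fin m → ℂ := fun l => if (l : ℕ) < i then c l else 0
  have hd : Matrix.vecMul d A.1 ∈ rowFlag A.1 i :=
    ⟨d, fun l hl => by simp only [d]; rw [if_neg (by omega)], rfl⟩
  have hcd : c = d := by
    by_contra hne
    obtain ⟨k, hk⟩ := exists_leadIdx (c - d) (sub_ne_zero.2 hne)
    have h := (U.2.2.2.2 i k).1 ⟨_, ?_, lead_vecMul A.1 A.2.1 A.2.2 _ k hk⟩
    · apply hk.2
      simp [d, h]
    · rw [Matrix.sub_vecMul]
      exact Submodule.sub_mem _ hw (hle hd)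
  rw [hcd]; exact hd

lemma flagC_equiv (m : ℕ) : Nonempty (FlagC m ≃ UniTri m) := by
  choose F hF using fun U : FlagC m => flagC_exists U
  refine ⟨Equiv.ofBijective F ⟨?_, ?_⟩⟩
  · intro U W h
    apply Subtype.ext
    funext i
    rw [rowFlag_eq (F U) U (hF U), rowFlag_eq (F W) W (hF W), h]
  · intro A
    refine ⟨⟨rowFlag A.1, rowFlag_isFlag A⟩, ?_⟩
    refine flagC_unique _ _ _ (hF _) ?_
    intro i
    exact row_mem_rowFlag A.1 _ _ (by simp)

lemma uniTri_equiv (m : ℕ) : Nonempty (UniTri m ≃ (Fin (m*(m-1)/2) → ℂ)) := by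
  have e1 : UniTri m ≃ ((Σ j : Fin m, Fin (j : ℕ)) → ℂ) :=
    { toFun := fun A p => A.1 ⟨p.2, p.2.2.trans p.1.2⟩ p.1
      invFun := fun f => ⟨fun i j => if h : i < j then f ⟨j, ⟨i, h⟩⟩ else if i = j then 1 else 0, by
        refine ⟨fun i j h => ?_, fun i => by simp⟩
        simp only
        rw [dif_neg (not_lt.2 h.le), if_neg h.ne']⟩
      left_inv := by
        intro A
        apply Subtype.ext
        funext i j
        simp only
        split_ifs with h h'
        · rfl
        · rw [h', A.2.2]
        · rw [A.2.1]
          exact lt_of_le_of_ne (not_lt.1 h) (Ne.symm h')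
      right_inv := by
        intro f
        funext p
        obtain ⟨j, i⟩ := p
        simp only
        rw [dif_pos]
        exact Fin.lt_def.2 i.2 }
  have hc : Fintype.card (Σ j : Fin m, Fin (j : ℕ)) = Fintype.card (Fin (m*(m-1)/2)) := by
    rw [Fintype.card_sigma]
    simp only [Fintype.card_fin]
    rw [Fin.sum_univ_eq_sum_range (fun i => i), Finset.sum_range_id]
  exact ⟨e1.trans (Equiv.arrowCongr (Fintype.equivOfCardEq hc) (Equiv.refl ℂ))⟩

/-! ### Orders of power series -/

/-- `x` has order exactly `n`. -/
def LO (x : 𝒪) (n : ℕ) : Prop := (∀ d < n, PowerSeries.coeff d x = 0) ∧ PowerSeries.coeff n x ≠ 0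

lemma LO_iff (x : 𝒪) (n : ℕ) : LO x n ↔ x ≠ 0 ∧ ord x = n := by
  constructor
  · rintro ⟨h1, h2⟩
    refine ⟨fun h => h2 (by simp [h]), ?_⟩
    apply le_antisymm
    · exact Nat.sInf_le h2
    · refine le_csInf ⟨n, h2⟩ fun b hb => ?_
      by_contra hlt
      exact hb (h1 b (not_le.1 hlt))
  · rintro ⟨hx, rfl⟩
    have hne : {n : ℕ | PowerSeries.coeff n x ≠ 0}.Nonempty := by
      by_contra h
      apply hx
      ext n
      by_contra h'
      exact h ⟨n, by simpa using h'⟩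
    refine ⟨fun d hd => ?_, Nat.sInf_mem hne⟩
    by_contra h
    exact Nat.notMem_of_lt_sInf hd h

lemma mem_DeltaM (R : Subalgebra ℂ 𝒪) (M : Submodule ↥R 𝒪) (n : ℕ) :
    n ∈ DeltaM R M ↔ ∃ x ∈ M, LO x n := by
  simp only [DeltaM, LO_iff, Set.mem_ofPred_eq]

lemma mem_zO (j : ℕ) (x : 𝒪) : x ∈ zO j ↔ ∀ d < j, PowerSeries.coeff d x = 0 := by
  rw [← PowerSeries.X_pow_dvd_iff]
  simp only [zO, LinearMap.mem_range, LinearMap.mulLeft_apply]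
  constructor
  · rintro ⟨y, rfl⟩
    exact Dvd.intro y rfl
  · rintro ⟨y, rfl⟩
    exact ⟨y, rfl⟩

lemma zO_anti {i j : ℕ} (h : i ≤ j) : zO j ≤ zO i := by
  intro x hx
  rw [mem_zO] at *
  exact fun d hd => hx d (by omega)

lemma LO_mem_zO {x : 𝒪} {n : ℕ} (h : LO x n) : x ∈ zO n := (mem_zO _ _).2 h.1

lemma mem_zO_succ {x : 𝒪} {n : ℕ} (h : x ∈ zO n) (h' : PowerSeries.coeff n x = 0) :
    x ∈ zO (n+1) := by
  rw [mem_zO] at *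
  intro d hd
  rcases Nat.lt_succ_iff_lt_or_eq.1 hd with h1 | h1
  · exact h d h1
  · rw [h1, h']

lemma cond_le (R : Subalgebra ℂ 𝒪) (c : ℕ) (hc : ∀ f : 𝒪, (PowerSeries.X : 𝒪)^c * f ∈ R)
    (M : Submodule ↥R 𝒪) (x : 𝒪) (hx : x ∈ M) (h0 : LO x 0) : ∀ f ∈ zO c, f ∈ M := by
  rintro _ ⟨f, rfl⟩
  have hu : IsUnit x := by
    rw [PowerSeries.isUnit_iff_constantCoeff]
    have := h0.2
    rw [PowerSeries.coeff_zero_eq_constantCoeff_apply] at this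
    exact isUnit_iff_ne_zero.2 this
  obtain ⟨u, rfl⟩ := hu
  have := M.smul_mem ⟨_, hc (f * ↑u⁻¹)⟩ hx
  rw [Subalgebra.smul_def, smul_eq_mul] at this
  convert this using 1
  simp [mul_assoc]

/-- Truncation. -/
def truncL (c : ℕ) : 𝒪 →ₗ[ℂ] (Fin c → ℂ) := LinearMap.pi fun i => PowerSeries.coeff (R := ℂ) (i : ℕ)

lemma mem_ker_truncL (c : ℕ) (x : 𝒪) : truncL c x = 0 ↔ x ∈ zO c := by
  rw [mem_zO, funext_iff]
  constructor
  · intro h d hd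
    exact h ⟨d, hd⟩
  · intro h i
    exact h i i.2

lemma fg_of_cond (R : Subalgebra ℂ 𝒪) (c : ℕ) (hc : ∀ f : 𝒪, (PowerSeries.X : 𝒪)^c * f ∈ R)
    (M : Submodule ↥R 𝒪) (hM : ∀ f ∈ zO c, f ∈ M) : M.FG := by
  -- a finite generating set modulo `zO N`
  have key : ∀ N : ℕ, ∃ S : Set 𝒪, S.Finite ∧ S ⊆ M ∧
      ∀ x ∈ M, ∃ y ∈ Submodule.span ℂ S, x - y ∈ zO N := by
    intro N
    have hfg : ((M.restrictScalars ℂ).map (truncL N)).FG := IsNoetherian.noetherian _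
    obtain ⟨S, hS, hspan⟩ := Submodule.fg_def.1 hfg
    have hsub : S ⊆ truncL N '' (M : Set 𝒪) := by
      intro s hs
      have : s ∈ (M.restrictScalars ℂ).map (truncL N) := hspan ▸ Submodule.subset_span hs
      simpa using this
    choose p hp hpS using fun s : S => hsub s.2
    have : Finite S := hS
    refine ⟨Set.range p, Set.finite_range p, ?_, ?_⟩
    · rintro _ ⟨s, rfl⟩
      exact hp s
    · intro x hx
      have hx' : truncL N x ∈ Submodule.span ℂ S := by
        rw [hspan]
        exact ⟨x, hx, rfl⟩
      have himg : truncL N '' Set.range p = S := by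
        rw [← Set.range_comp]
        have : (truncL N ∘ p) = Subtype.val := funext hpS
        rw [this, Subtype.range_coe]
      rw [← himg, Submodule.span_image] at hx'
      obtain ⟨y, hy, hyx⟩ := hx'
      refine ⟨y, hy, (mem_ker_truncL N _).1 ?_⟩
      rw [map_sub, hyx, sub_self]
  obtain ⟨S, hSf, hSM, hS⟩ := key (c + c)
  refine Submodule.fg_def.2 ⟨insert ((PowerSeries.X : 𝒪)^c) S, hSf.insert _, ?_⟩
  apply le_antisymm
  · rw [Submodule.span_le]
    rintro x (rfl | hx)
    · exact hM _ ⟨1, by simp⟩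
    · exact hSM hx
  · intro x hx
    obtain ⟨y, hy, hxy⟩ := hS x hx
    have h1 : y ∈ Submodule.span ↥R (insert ((PowerSeries.X : 𝒪)^c) S) := by
      have : Submodule.span ℂ S ≤
          (Submodule.span ↥R (insert ((PowerSeries.X : 𝒪)^c) S)).restrictScalars ℂ := by
        rw [Submodule.span_le]
        intro s hs
        exact Submodule.subset_span (Set.mem_insert_of_mem _ hs)
      exact this hy
    have h2 : x - y ∈ Submodule.span ↥R (insert ((PowerSeries.X : 𝒪)^c) S) := by
      obtain ⟨f, hf⟩ := hxy
      have := Submodule.smul_mem (Submodule.span ↥R (insert ((PowerSeries.X : 𝒪)^c) S))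
        ⟨_, hc f⟩ (Submodule.subset_span (Set.mem_insert _ _))
      rw [Subalgebra.smul_def, smul_eq_mul] at this
      rw [← hf]
      convert this using 1
      simp only [LinearMap.mulLeft_apply]
      ring
    simpa using Submodule.add_mem _ h2 h1

/-! ### The adapted complement -/

/-- The linear map `a ↦ ∑ a_l e_l`. -/
def sMap {m : ℕ} (e : Fin m → 𝒪) : (Fin m → ℂ) →ₗ[ℂ] 𝒪 := Fintype.linearCombination ℂ e

lemma sMap_apply {m : ℕ} (e : Fin m → 𝒪) (a : Fin m → ℂ) : sMap e a = ∑ l, a l • e l := rfl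

/-- The data of an adapted basis of a complement of `V` in `T`. -/
structure Adapted {m : ℕ} (T V : Submodule ℂ 𝒪) (gg : Fin m → ℕ) (e : Fin m → 𝒪) : Prop where
  le : V ≤ T
  mono : StrictMono gg
  mem : ∀ k, e k ∈ T ⊓ zO (gg k)
  notMem : ∀ k, e k ∉ V ⊔ (T ⊓ zO (gg k + 1))

section
variable {m : ℕ} {T V : Submodule ℂ 𝒪} {gg : Fin m → ℕ} {e : Fin m → 𝒪}

lemma Adapted.s_mem (h : Adapted T V gg e) (a : Fin m → ℂ) : sMap e a ∈ T := by
  rw [sMap_apply]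
  exact Submodule.sum_mem _ fun l _ => Submodule.smul_mem _ _ (h.mem l).1

lemma Adapted.s_rest (h : Adapted T V gg e) {a : Fin m → ℂ} {k : Fin m} (ha : LeadIdx a k) :
    sMap e a - a k • e k ∈ T ⊓ zO (gg k + 1) := by
  rw [sMap_apply, ← Finset.add_sum_erase _ _ (Finset.mem_univ k), add_sub_cancel_left]
  refine Submodule.sum_mem _ fun l hl => ?_
  rcases lt_or_gt_of_ne (Finset.ne_of_mem_erase hl) with hlt | hlt
  · rw [ha.1 l hlt, zero_smul]; exact Submodule.zero_mem _
  · exact Submodule.smul_mem _ _ ⟨(h.mem l).1, zO_anti (h.mono hlt) (h.mem l).2⟩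

lemma Adapted.s_notMem (h : Adapted T V gg e) {a : Fin m → ℂ} {k : Fin m} (ha : LeadIdx a k) :
    sMap e a ∉ V ⊔ (T ⊓ zO (gg k + 1)) := by
  intro hs
  have h1 : a k • e k ∈ V ⊔ (T ⊓ zO (gg k + 1)) := by
    have := Submodule.sub_mem _ hs (Submodule.mem_sup_right (h.s_rest ha))
    simpa using this
  exact h.notMem k ((Submodule.smul_mem_iff _ ha.2).1 h1)

lemma Adapted.s_LO (h : Adapted T V gg e) {a : Fin m → ℂ} {k : Fin m} (ha : LeadIdx a k) :
    LO (sMap e a) (gg k) := by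
  have hz : sMap e a ∈ zO (gg k) := by
    have := Submodule.add_mem _ (zO_anti (Nat.le_succ _) (h.s_rest ha).2)
      (Submodule.smul_mem _ (a k) (h.mem k).2)
    simpa using this
  refine ⟨(mem_zO _ _).1 hz, fun h0 => ?_⟩
  exact h.s_notMem ha (Submodule.mem_sup_right ⟨h.s_mem a, mem_zO_succ hz h0⟩)

lemma Adapted.s_inj (h : Adapted T V gg e) {a : Fin m → ℂ} (ha : sMap e a ∈ V) : a = 0 := by
  by_contra h0
  obtain ⟨k, hk⟩ := exists_leadIdx a h0
  exact h.s_notMem hk (Submodule.mem_sup_left ha)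

lemma Adapted.V_notLO (h : Adapted T V gg e) (k : Fin m) (v : 𝒪) (hv : v ∈ V) :
    ¬ LO v (gg k) := by
  intro hl
  apply h.notMem k
  set t : ℂ := PowerSeries.coeff (gg k) (e k) / PowerSeries.coeff (gg k) v with ht
  have h1 : e k - t • v ∈ T ⊓ zO (gg k + 1) := by
    refine ⟨Submodule.sub_mem _ (h.mem k).1 (Submodule.smul_mem _ _ (h.le hv)), ?_⟩
    apply mem_zO_succ
    · exact Submodule.sub_mem _ (h.mem k).2 (Submodule.smul_mem _ _ (LO_mem_zO hl))
    · rw [map_sub, map_smul, smul_eq_mul, ht, div_mul_cancel₀ _ hl.2, sub_self]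
  have := Submodule.add_mem _ (Submodule.mem_sup_left (Submodule.smul_mem V t hv))
    (Submodule.mem_sup_right (S := V) h1)
  simpa using this

lemma Adapted.dich (h : Adapted T V gg e) {x : 𝒪} {j : ℕ} (hx : LO x j) (hxT : x ∈ T)
    (a : Fin m → ℂ) (ha : x - sMap e a ∈ V) :
    (∃ v ∈ V, LO v j) ∨ ∃ k, LeadIdx a k ∧ gg k = j := by
  by_cases h0 : a = 0
  · subst h0
    left
    exact ⟨x, by simpa using ha, hx⟩
  obtain ⟨k, hk⟩ := exists_leadIdx a h0
  rcases lt_trichotomy (gg k) j with hlt | heq | hgt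
  · exfalso
    apply h.s_notMem hk
    have := Submodule.sub_mem _ (Submodule.mem_sup_right (S := V)
      (show x ∈ T ⊓ zO (gg k + 1) from ⟨hxT, zO_anti hlt (LO_mem_zO hx)⟩))
      (Submodule.mem_sup_left ha)
    simpa using this
  · exact Or.inr ⟨k, hk, heq⟩
  · left
    have hs := (h.s_LO hk).1
    refine ⟨_, ha, fun d hd => ?_, ?_⟩
    · rw [map_sub, hx.1 d hd, hs d (by omega), sub_zero]
    · rw [map_sub, hs j hgt, sub_zero]; exact hx.2

lemma Adapted.span (h : Adapted T V gg e) (N : ℕ) (hN : zO N ≤ V) (hdim : quotDim T V = m) :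
    ∀ x ∈ T, ∃ a, x - sMap e a ∈ V := by
  have hfin : FiniteDimensional ℂ (↥T ⧸ Submodule.comap T.subtype V) := by
    have hle : LinearMap.ker ((truncL N).comp T.subtype) ≤ Submodule.comap T.subtype V := by
      intro x hx
      exact hN ((mem_ker_truncL N _).1 hx)
    have : FiniteDimensional ℂ (↥T ⧸ LinearMap.ker ((truncL N).comp T.subtype)) :=
      ((truncL N).comp T.subtype).quotKerEquivRange.symm.finiteDimensional
    exact Module.Finite.of_surjective (Submodule.factor hle) (Submodule.factor_surjective hle)
  let b : Fin m → (↥T ⧸ Submodule.comap T.subtype V) := fun i =>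
    (Submodule.comap T.subtype V).mkQ ⟨e i, (h.mem i).1⟩
  have hb : ∀ a : Fin m → ℂ, ∑ i, a i • b i =
      (Submodule.comap T.subtype V).mkQ ⟨sMap e a, h.s_mem a⟩ := by
    intro a
    simp only [b, ← map_smul, ← map_sum]
    congr 1
    apply Subtype.ext
    simp [sMap_apply]
  have hli : LinearIndependent ℂ b := by
    rw [Fintype.linearIndependent_iff]
    intro a ha
    rw [hb, Submodule.mkQ_apply, Submodule.Quotient.mk_eq_zero] at ha
    have := h.s_inj (a := a) ha
    intro i
    rw [this]; rfl
  have htop := hli.span_eq_top_of_card_eq_finrank' (by rw [Fintype.card_fin]; exact hdim.symm)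
  intro x hx
  have hxm : (Submodule.comap T.subtype V).mkQ ⟨x, hx⟩ ∈ Submodule.span ℂ (Set.range b) := by
    rw [htop]; trivial
  rw [Submodule.mem_span_range_iff_exists_fun] at hxm
  obtain ⟨a, ha⟩ := hxm
  refine ⟨a, ?_⟩
  rw [hb] at ha
  have := (Submodule.Quotient.eq _).1 ha.symm
  exact this

end

lemma exists_adapted {m : ℕ} (T V : Submodule ℂ 𝒪) (hle : V ≤ T) (gg : Fin m → ℕ)
    (hg : StrictMono gg)
    (hdim : ∀ k, quotDim (V ⊔ (T ⊓ zO (gg k))) (V ⊔ (T ⊓ zO (gg k + 1))) = 1) :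
    ∃ e, Adapted T V gg e := by
  have : ∀ k, ∃ x ∈ T ⊓ zO (gg k), x ∉ V ⊔ (T ⊓ zO (gg k + 1)) := by
    intro k
    by_contra hcon
    push Not at hcon
    have h1 : V ⊔ (T ⊓ zO (gg k)) ≤ V ⊔ (T ⊓ zO (gg k + 1)) := sup_le le_sup_left hcon
    have h2 := hdim k
    rw [quotDim, Submodule.comap_subtype_eq_top.2 h1] at h2
    rw [Module.finrank_zero_of_subsingleton] at h2
    exact zero_ne_one h2
  choose e he hne using this
  exact ⟨e, hle, hg, he, hne⟩

/-- A `ℂ`-subspace between `𝔪𝓜` and `𝓜` is an `ℛ`-submodule. -/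
def toR (R : Subalgebra ℂ 𝒪) (M : Submodule ↥R 𝒪) (N : Submodule ℂ 𝒪) (h1 : mSmul R M ≤ N)
    (h2 : N ≤ M.restrictScalars ℂ) : Submodule ↥R 𝒪 where
  carrier := N
  add_mem' := fun ha hb => N.add_mem ha hb
  zero_mem' := N.zero_mem
  smul_mem' := by
    rintro ⟨r, hr⟩ x hx
    change r * x ∈ N
    set t : ℂ := PowerSeries.coeff 0 r with ht
    have e1 : r * x = (r - algebraMap ℂ 𝒪 t) * x + t • x := by
      rw [Algebra.smul_def]; ring
    rw [e1]
    refine N.add_mem (h1 (Submodule.subset_span ⟨_, R.sub_mem hr (R.algebraMap_mem t), x, h2 hx,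
      ?_, rfl⟩)) (N.smul_mem _ hx)
    by_cases h0 : r - algebraMap ℂ 𝒪 t = 0
    · exact Or.inl h0
    · right
      obtain ⟨_, h⟩ := (LO_iff (r - algebraMap ℂ 𝒪 t) _).2 ⟨h0, rfl⟩
      rw [Nat.pos_iff_ne_zero]
      intro hz
      apply h
      rw [hz]
      simp [ht]

lemma mSmul_le_zO (R : Subalgebra ℂ 𝒪) (M : Submodule ↥R 𝒪) : mSmul R M ≤ zO 1 := by
  rw [mSmul, Submodule.span_le]
  rintro _ ⟨r, hr, y, hy, h, rfl⟩
  rw [SetLike.mem_coe, mem_zO]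
  intro d hd
  obtain rfl : d = 0 := by omega
  have h0 : PowerSeries.coeff 0 r = 0 := by
    rcases h with rfl | h
    · simp
    · by_contra hne
      have := (LO_iff r 0).1 ⟨fun d hd => absurd hd (Nat.not_lt_zero d), hne⟩
      omega
  rw [PowerSeries.coeff_zero_eq_constantCoeff_apply] at *
  rw [map_mul, h0, zero_mul]

lemma Adapted.lead_iff {m : ℕ} {T V : Submodule ℂ 𝒪} {gg : Fin m → ℕ} {e : Fin m → 𝒪}
    (h : Adapted T V gg e) (hspan : ∀ x ∈ T, ∃ a, x - sMap e a ∈ V) (W : Submodule ℂ 𝒪)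
    (hVW : V ≤ W) (hWT : W ≤ T) (k : Fin m) :
    (∃ w ∈ W.comap (sMap e), LeadIdx w k) ↔ ∃ x ∈ W, LO x (gg k) := by
  constructor
  · rintro ⟨w, hw, hk⟩
    exact ⟨_, hw, h.s_LO hk⟩
  · rintro ⟨x, hx, hl⟩
    obtain ⟨a, ha⟩ := hspan x (hWT hx)
    rcases h.dich hl (hWT hx) a ha with ⟨v, hv, hvl⟩ | ⟨l, hl1, hl2⟩
    · exact absurd hvl (h.V_notLO k v hv)
    · obtain rfl := h.mono.injective hl2
      refine ⟨a, ?_, hl1⟩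
      have := W.sub_mem hx (hVW ha)
      simpa using this

lemma Dset_iff (R : Subalgebra ℂ 𝒪) (m : ℕ) (D0 : Set ℕ) (g : ℕ → ℕ) (hflag : IsDFlag R m D0 g)
    (Mtop : Submodule ↥R 𝒪) (hDm : Dset R Mtop = DFlagSet D0 g m) (V : Submodule ℂ 𝒪)
    (e : Fin m → 𝒪)
    (h : Adapted (Mtop.restrictScalars ℂ) V (fun k : Fin m => g (k + 1)) e)
    (hspan : ∀ x ∈ Mtop.restrictScalars ℂ, ∃ a, x - sMap e a ∈ V)
    (W : Submodule ↥R 𝒪) (hVW : V ≤ W.restrictScalars ℂ) (hWT : W ≤ Mtop) (i : ℕ) (hi : i ≤ m) :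
    Dset R W = DFlagSet D0 g i ↔
      ∀ k : Fin m, (∃ w ∈ (W.restrictScalars ℂ).comap (sMap e), LeadIdx w k) ↔ (k : ℕ) < i := by
  obtain ⟨hD0, hmono, hgap, -⟩ := hflag
  have hlead : ∀ k : Fin m, (∃ w ∈ (W.restrictScalars ℂ).comap (sMap e), LeadIdx w k) ↔
      g (k + 1) ∈ DeltaM R W := by
    intro k
    rw [h.lead_iff hspan _ hVW hWT k, mem_DeltaM]
    rfl
  have hgk : ∀ k : Fin m, g (k + 1) ∈ Gaps R \ D0 := fun k => hgap _ (by omega) (by omega)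
  have hgF : ∀ k : Fin m, g (k + 1) ∈ DFlagSet D0 g i ↔ (k : ℕ) < i := by
    intro k
    constructor
    · rintro (h' | ⟨j, hj, hjk⟩)
      · exact absurd h' (hgk k).2
      · have := hmono.injOn (Set.mem_Icc.2 ⟨hj.1, hj.2.trans hi⟩)
          (Set.mem_Icc.2 ⟨by omega, by omega⟩ : (k : ℕ) + 1 ∈ Set.Icc 1 m) hjk
        have := hj.2
        omega
    · intro hk
      exact Or.inr ⟨k + 1, ⟨by omega, by omega⟩, rfl⟩
  have hD0W : D0 ⊆ Dset R W := by
    intro j hj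
    have hjT : j ∈ Dset R Mtop := by rw [hDm]; exact Or.inl hj
    obtain ⟨x, hx, hxl⟩ := (mem_DeltaM _ _ _).1 hjT.1
    refine ⟨?_, hD0 hj⟩
    obtain ⟨a, ha⟩ := hspan x hx
    rcases h.dich hxl hx a ha with ⟨v, hv, hvl⟩ | ⟨l, hl1, hl2⟩
    · exact (mem_DeltaM _ _ _).2 ⟨v, hVW hv, hvl⟩
    · exact absurd (hl2 ▸ hj) (hgk l).2
  constructor
  · intro hD k
    rw [hlead, ← hgF, ← hD]
    exact ⟨fun h' => ⟨h', (hgk k).1⟩, fun h' => h'.1⟩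
  · intro hL
    ext j
    constructor
    · rintro ⟨hj1, hj2⟩
      have hjT : j ∈ Dset R Mtop := by
        refine ⟨?_, hj2⟩
        obtain ⟨x, hx, hxl⟩ := (mem_DeltaM _ _ _).1 hj1
        exact (mem_DeltaM _ _ _).2 ⟨x, hWT hx, hxl⟩
      rw [hDm] at hjT
      rcases hjT with h' | ⟨j', hj', rfl⟩
      · exact Or.inl h'
      · obtain ⟨k, rfl⟩ : ∃ k, j' = k + 1 := ⟨j' - 1, by have := hj'.1; omega⟩
        have hkm : k < m := hj'.2
        exact (hgF ⟨k, hkm⟩).2 ((hL ⟨k, hkm⟩).1 ((hlead ⟨k, hkm⟩).2 hj1))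
    · rintro (h' | ⟨j', hj', rfl⟩)
      · exact hD0W h'
      · obtain ⟨k, rfl⟩ : ∃ k, j' = k + 1 := ⟨j' - 1, by have := hj'.1; omega⟩
        have hki : k < i := hj'.2
        have hkm : k < m := by omega
        exact ⟨(hlead ⟨k, hkm⟩).1 ((hL ⟨k, hkm⟩).2 hki), (hgk ⟨k, hkm⟩).1⟩

lemma flags_equiv (R : Subalgebra ℂ 𝒪) (c : ℕ) (hR : HasConductor R c)
    (m : ℕ) (D0 : Set ℕ) (g : ℕ → ℕ) (hflag : IsDFlag R m D0 g)
    (Mtop : Submodule ↥R 𝒪)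
    (hDm : Dset R Mtop = DFlagSet D0 g m)
    (V : Submodule ℂ 𝒪)
    (hV1 : mSmul R Mtop ≤ V) (hV2 : V ≤ Mtop.restrictScalars ℂ)
    (hVdim : quotDim (Mtop.restrictScalars ℂ) V = m)
    (hVdim2 : ∀ i, 1 ≤ i → i ≤ m →
      quotDim (V ⊔ ((Mtop.restrictScalars ℂ) ⊓ zO (g i)))
              (V ⊔ ((Mtop.restrictScalars ℂ) ⊓ zO (g i + 1))) = 1)
    (hVnot : ¬ V ≤ ((Mtop.restrictScalars ℂ) ⊓ zO 1) ⊔ mSmul R Mtop)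
    (M0 : Submodule ↥R 𝒪) (hM0 : (M0 : Set 𝒪) = (V : Set 𝒪)) :
    Nonempty (FlagsBetween R m D0 g M0 Mtop ≃ FlagC m) := by
  have hM0V : M0.restrictScalars ℂ = V := SetLike.coe_injective hM0
  -- an element of order zero
  obtain ⟨x0, hx0V, hx0⟩ : ∃ x ∈ V, LO x 0 := by
    by_contra hcon
    push Not at hcon
    apply hVnot
    intro x hx
    refine Submodule.mem_sup_left ⟨hV2 hx, (mem_zO _ _).2 fun d hd => ?_⟩
    obtain rfl : d = 0 := by omega
    by_contra hne
    exact hcon x hx ⟨fun d hd => absurd hd (Nat.not_lt_zero d), hne⟩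
  have hzV : zO c ≤ V := by
    intro f hf
    have := cond_le R c hR.2.1 M0 x0 (by rw [← SetLike.mem_coe, hM0]; exact hx0V) hx0 f hf
    rw [← SetLike.mem_coe, hM0] at this
    exact this
  have hgm : StrictMono (fun k : Fin m => g (k + 1)) := by
    intro k l hkl
    have hkl' := Fin.lt_def.1 hkl
    exact hflag.2.1 (Set.mem_Icc.2 ⟨by omega, by omega⟩) (Set.mem_Icc.2 ⟨by omega, by omega⟩)
      (by omega)
  obtain ⟨e, he⟩ := exists_adapted (Mtop.restrictScalars ℂ) V hV2 (fun k : Fin m => g (k + 1)) hgm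
    (fun k => hVdim2 _ (by omega) (by omega))
  have hspan := he.span c hzV hVdim
  have hDs := Dset_iff R m D0 g hflag Mtop hDm V e he hspan
  have hstdW : ∀ W : Submodule ↥R 𝒪, V ≤ W.restrictScalars ℂ → IsStd R W := by
    intro W hW
    exact ⟨fg_of_cond R c hR.2.1 W fun f hf => hW (hzV hf), x0, hW hx0V, (LO_iff _ _).1 hx0⟩
  -- correspondence of subspaces
  have hback : ∀ W : Submodule ℂ 𝒪, V ≤ W → W ≤ Mtop.restrictScalars ℂ →
      V ⊔ (W.comap (sMap e)).map (sMap e) = W := by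
    intro W hVW hWT
    apply le_antisymm (sup_le hVW (Submodule.map_comap_le _ _))
    intro x hx
    obtain ⟨a, ha⟩ := hspan x (hWT hx)
    have h1 : sMap e a ∈ W := by simpa using W.sub_mem hx (hVW ha)
    have := Submodule.add_mem _ (Submodule.mem_sup_left ha)
      (Submodule.mem_sup_right (S := V) (Submodule.mem_map_of_mem (f := sMap e)
        (p := W.comap (sMap e)) h1))
    simpa using this
  have hforth : ∀ U : Submodule ℂ (Fin m → ℂ), (V ⊔ U.map (sMap e)).comap (sMap e) = U := by
    intro U
    apply le_antisymm
    · intro a ha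
      obtain ⟨v, hv, _, ⟨u, hu, rfl⟩, huv⟩ := Submodule.mem_sup.1 (Submodule.mem_comap.1 ha)
      have : a - u = 0 := by
        apply he.s_inj
        rw [map_sub, ← huv]
        simpa using hv
      rw [sub_eq_zero.1 this]; exact hu
    · intro a ha
      exact Submodule.mem_sup_right (Submodule.mem_map_of_mem ha)
  have hUT : ∀ U : Submodule ℂ (Fin m → ℂ), V ⊔ U.map (sMap e) ≤ Mtop.restrictScalars ℂ := by
    intro U
    refine sup_le hV2 ?_
    rintro _ ⟨a, _, rfl⟩
    exact he.s_mem a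
  have hmonoF : ∀ MM : FlagsBetween R m D0 g M0 Mtop, Monotone MM.1 := fun MM =>
    Fin.monotone_iff_le_succ.2 MM.2.1
  have hlo : ∀ (MM : FlagsBetween R m D0 g M0 Mtop) i, V ≤ (MM.1 i).restrictScalars ℂ := by
    intro MM i
    rw [← hM0V]
    have h1 : M0 ≤ MM.1 i := MM.2.2.1.symm.le.trans (hmonoF MM (Fin.zero_le i))
    exact h1
  have hhi : ∀ (MM : FlagsBetween R m D0 g M0 Mtop) i, MM.1 i ≤ Mtop := by
    intro MM i
    refine le_trans (hmonoF MM (Fin.le_last i)) ?_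
    rw [MM.2.2.2.1]
  have hbot : V.comap (sMap e) = ⊥ := by
    rw [eq_bot_iff]
    intro a ha
    exact he.s_inj ha
  have htop : (Mtop.restrictScalars ℂ).comap (sMap e) = ⊤ := by
    rw [eq_top_iff]
    intro a _
    exact he.s_mem a
  refine ⟨{
    toFun := fun MM => ⟨fun i => ((MM.1 i).restrictScalars ℂ).comap (sMap e), ?_, ?_, ?_, ?_⟩
    invFun := fun U => ⟨fun i => toR R Mtop (V ⊔ (U.1 i).map (sMap e))
      (hV1.trans le_sup_left) (hUT _), ?_, ?_, ?_, ?_⟩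
    left_inv := ?_
    right_inv := ?_ }⟩
  · intro i
    exact Submodule.comap_mono (MM.2.1 i)
  · simp only [MM.2.2.1]
    rw [hM0V, hbot]
  · simp only [MM.2.2.2.1]
    exact htop
  · intro i k
    exact (hDs (MM.1 i) (hlo MM i) (hhi MM i) i (by omega)).1 (MM.2.2.2.2 i).2 k
  · intro i
    change V ⊔ (U.1 i.castSucc).map (sMap e) ≤ V ⊔ (U.1 i.succ).map (sMap e)
    exact sup_le_sup_left (Submodule.map_mono (U.2.1 i)) _
  · apply SetLike.coe_injective
    rw [hM0]
    change ((V ⊔ (U.1 0).map (sMap e) : Submodule ℂ 𝒪) : Set 𝒪) = V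
    rw [U.2.2.1, Submodule.map_bot, sup_bot_eq]
  · apply SetLike.coe_injective
    change ((V ⊔ (U.1 (Fin.last m)).map (sMap e) : Submodule ℂ 𝒪) : Set 𝒪) =
      (Mtop.restrictScalars ℂ : Submodule ℂ 𝒪)
    rw [U.2.2.2.1, ← htop, hback _ hV2 le_rfl]
  · intro i
    have hle : V ≤ (toR R Mtop (V ⊔ (U.1 i).map (sMap e))
      (hV1.trans le_sup_left) (hUT _)).restrictScalars ℂ := fun x hx => Submodule.mem_sup_left hx
    refine ⟨hstdW _ hle, (hDs _ hle (hUT _) i (by omega)).2 ?_⟩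
    have : (toR R Mtop (V ⊔ (U.1 i).map (sMap e))
      (hV1.trans le_sup_left) (hUT _)).restrictScalars ℂ = V ⊔ (U.1 i).map (sMap e) := rfl
    rw [this, hforth]
    exact U.2.2.2.2 i
  · intro MM
    apply Subtype.ext
    funext i
    apply SetLike.coe_injective
    exact congrArg (fun W : Submodule ℂ 𝒪 => (W : Set 𝒪)) (hback _ (hlo MM i) (hhi MM i))
  · intro U
    apply Subtype.ext
    funext i
    exact hforth (U.1 i)

/-- With `𝓜_top`, `𝓜̄_0` (lifted to `V`) and `𝓜_0` as in the Nakayama setting,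
the set of flags of standard modules realizing the `D`-flag with the given ends
`𝓜_0`, `𝓜_m = 𝓜_top` is in bijection with the group of `m×m` upper-triangular
unipotent complex matrices, hence with `ℂ^{m(m−1)/2}`. -/
theorem statement11 (R : Subalgebra ℂ 𝒪) (c : ℕ) (hR : HasConductor R c)
    (m : ℕ) (D0 : Set ℕ) (g : ℕ → ℕ) (hflag : IsDFlag R m D0 g)
    (Mtop : Submodule ↥R 𝒪) (hstd : IsStd R Mtop)
    (hDm : Dset R Mtop = DFlagSet D0 g m)
    (hdim : ∀ i, 1 ≤ i → i ≤ m →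
      quotDim (((Mtop.restrictScalars ℂ) ⊓ zO (g i)) ⊔ mSmul R Mtop)
              (((Mtop.restrictScalars ℂ) ⊓ zO (g i + 1)) ⊔ mSmul R Mtop) = 1)
    (V : Submodule ℂ 𝒪)
    (hV1 : mSmul R Mtop ≤ V) (hV2 : V ≤ Mtop.restrictScalars ℂ)
    (hVdim : quotDim (Mtop.restrictScalars ℂ) V = m)
    (hVdim2 : ∀ i, 1 ≤ i → i ≤ m →
      quotDim (V ⊔ ((Mtop.restrictScalars ℂ) ⊓ zO (g i)))
              (V ⊔ ((Mtop.restrictScalars ℂ) ⊓ zO (g i + 1))) = 1)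
    (hVnot : ¬ V ≤ ((Mtop.restrictScalars ℂ) ⊓ zO 1) ⊔ mSmul R Mtop)
    (M0 : Submodule ↥R 𝒪) (hM0 : (M0 : Set 𝒪) = (V : Set 𝒪)) :
    Nonempty (FlagsBetween R m D0 g M0 Mtop ≃
      {A : Matrix (Fin m) (Fin m) ℂ // (∀ i j : Fin m, j < i → A i j = 0) ∧
        ∀ i : Fin m, A i i = 1}) ∧
    Nonempty (FlagsBetween R m D0 g M0 Mtop ≃ (Fin (m*(m-1)/2) → ℂ)) := by
  obtain ⟨e1⟩ := flags_equiv R c hR m D0 g hflag Mtop hDm V hV1 hV2 hVdim hVdim2 hVnot M0 hM0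
  obtain ⟨e2⟩ := flagC_equiv m
  obtain ⟨e3⟩ := uniTri_equiv m
  exact ⟨⟨e1.trans e2⟩, ⟨(e1.trans e2).trans e3⟩⟩

end
end

section
/- Let 𝓜_0 be a standard module and let g ∈ G∖D_{𝓜_0} be a gap such that every gap g' ∈ G with g' > g belongs to D_{𝓜_0}. Then for every h ∈ 𝒪 with ν(h) = g, the module 𝓜_1 := 𝓜_0 + ℛh equals 𝓜_0 ⊕ ℂh and is a standard module with Δ_{𝓜_1} = Δ_{𝓜_0} ∪ {g}, i.e. D_{𝓜_1} = D_{𝓜_0} ∪ {g}. -/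
open PowerSeries

noncomputable section

lemma ord_eq_of {f : 𝒪} {n : ℕ} (h1 : PowerSeries.coeff n f ≠ 0)
    (h2 : ∀ m < n, PowerSeries.coeff m f = 0) : ord f = n := by
  apply le_antisymm
  · exact Nat.sInf_le h1
  · by_contra hlt
    push Not at hlt
    have : PowerSeries.coeff (ord f) f ≠ 0 :=
      Nat.sInf_mem (s := {n : ℕ | PowerSeries.coeff n f ≠ 0}) ⟨n, h1⟩
    exact this (h2 _ hlt)

lemma coeff_ord_ne {f : 𝒪} (hf : f ≠ 0) : PowerSeries.coeff (ord f) f ≠ 0 := by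
  apply Nat.sInf_mem (s := {n : ℕ | PowerSeries.coeff n f ≠ 0})
  by_contra hne
  apply hf
  ext n
  by_contra h
  exact hne ⟨n, h⟩

lemma coeff_lt_ord {f : 𝒪} {m : ℕ} (h : m < ord f) : PowerSeries.coeff m f = 0 := by
  by_contra hne
  exact absurd (Nat.sInf_le (s := {n : ℕ | PowerSeries.coeff n f ≠ 0}) hne) (not_le.mpr h)

lemma ne_zero_of_coeff {f : 𝒪} {n : ℕ} (h : PowerSeries.coeff n f ≠ 0) : f ≠ 0 := by
  rintro rfl
  simp at h

lemma csmul_mem (R : Subalgebra ℂ 𝒪) (M : Submodule ↥R 𝒪) (a : ℂ) {x : 𝒪} (hx : x ∈ M) :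
    a • x ∈ M := (M.restrictScalars ℂ).smul_mem a hx

lemma ord_mul_unit {r x : 𝒪} (hr : r ≠ 0) (hx : PowerSeries.coeff 0 x ≠ 0) :
    ord (r * x) = ord r := by
  obtain ⟨q, hq⟩ := PowerSeries.X_pow_dvd_iff.mpr (fun m hm => coeff_lt_ord (f := r) hm)
  have h0 := coeff_ord_ne hr
  set n := ord r with hn
  have hqn : PowerSeries.coeff 0 q ≠ 0 := by
    have := PowerSeries.coeff_X_pow_mul q n 0
    rw [← hq, zero_add] at this
    rwa [← this]
  have e : r * x = PowerSeries.X ^ n * (q * x) := by rw [hq]; ring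
  apply ord_eq_of
  · have := PowerSeries.coeff_X_pow_mul (q * x) n 0
    rw [zero_add, ← e] at this
    rw [this]
    simp only [PowerSeries.coeff_zero_eq_constantCoeff, map_mul] at *
    exact mul_ne_zero hqn hx
  · exact PowerSeries.X_pow_dvd_iff.mp ⟨_, e⟩

lemma high_mem (R : Subalgebra ℂ 𝒪) (c : ℕ) (hR : HasConductor R c)
    (M0 : Submodule ↥R 𝒪) (hstd : IsStd R M0) (gp : ℕ)
    (hD : ∀ n, gp < n → n ∈ DeltaM R M0) :
    ∀ d k : ℕ, c ≤ k + d → gp < k → ∀ f : 𝒪, (PowerSeries.X : 𝒪) ^ k ∣ f → f ∈ M0 := by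
  obtain ⟨-, x0, hx0, hx0n, hx00⟩ := hstd
  have hu : PowerSeries.coeff 0 x0 ≠ 0 := by
    have := coeff_ord_ne hx0n
    rwa [hx00] at this
  intro d
  induction d with
  | zero =>
    rintro k hk - f ⟨q, hq⟩
    have hinv : x0⁻¹ * x0 = 1 := PowerSeries.inv_mul_cancel _ (by simpa using hu)
    have hr : (PowerSeries.X : 𝒪) ^ c * (PowerSeries.X ^ (k - c) * q * x0⁻¹) ∈ R := hR.2.1 _
    have := M0.smul_mem ⟨_, hr⟩ hx0
    convert this using 1
    change f = _ * x0
    have hkc : k = c + (k - c) := by omega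
    calc f = PowerSeries.X ^ (c + (k - c)) * q * (x0⁻¹ * x0) := by rw [hinv, ← hkc, hq, mul_one]
      _ = _ := by rw [pow_add]; ring
  | succ d ih =>
    intro k hk hgk f hf
    obtain ⟨y, hy, hyn, hyk⟩ := hD k hgk
    have hyc := coeff_ord_ne hyn
    rw [hyk] at hyc
    have hf' := PowerSeries.X_pow_dvd_iff.mp hf
    set a : ℂ := PowerSeries.coeff k f / PowerSeries.coeff k y
    have h1 : f - a • y ∈ M0 := by
      apply ih (k + 1) (by omega) (by omega)
      rw [PowerSeries.X_pow_dvd_iff]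
      intro m hm
      rcases Nat.lt_succ_iff_lt_or_eq.mp hm with h | h
      · have : PowerSeries.coeff m y = 0 := coeff_lt_ord (by omega)
        simp [hf' m h, this]
      · subst h
        simp [a, hyc]
    have := M0.add_mem h1 (csmul_mem R M0 a hy)
    simpa using this

/-- If `g` is a gap not in `D_{𝓜_0}` such that every larger gap lies in
`D_{𝓜_0}`, then for every `h ∈ 𝒪` with `ν(h) = g` the module
`𝓜_1 = 𝓜_0 + ℛh` equals `𝓜_0 ⊕ ℂh` and is a standard module with
`Δ_{𝓜_1} = Δ_{𝓜_0} ∪ {g}`, i.e. `D_{𝓜_1} = D_{𝓜_0} ∪ {g}`. -/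
theorem statement12 (R : Subalgebra ℂ 𝒪) (c : ℕ) (hR : HasConductor R c)
    (M0 : Submodule ↥R 𝒪) (hstd : IsStd R M0)
    (gp : ℕ) (hg : gp ∈ Gaps R) (hgD : gp ∉ Dset R M0)
    (habove : ∀ g' ∈ Gaps R, gp < g' → g' ∈ Dset R M0) :
    ∀ h : 𝒪, h ≠ 0 → ord h = gp →
      ((M0 ⊔ Submodule.span ↥R {h}).restrictScalars ℂ
          = M0.restrictScalars ℂ ⊔ (ℂ ∙ h)) ∧
      h ∉ M0 ∧
      IsStd R (M0 ⊔ Submodule.span ↥R {h}) ∧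
      DeltaM R (M0 ⊔ Submodule.span ↥R {h}) = DeltaM R M0 ∪ {gp} ∧
      Dset R (M0 ⊔ Submodule.span ↥R {h}) = Dset R M0 ∪ {gp} := by
  intro h hh hord
  have hDelta : ∀ n, gp < n → n ∈ DeltaM R M0 := by
    intro n hn
    by_cases hG : n ∈ Gaps R
    · exact (habove n hG hn).1
    · obtain ⟨r, hr, hr0, hrn⟩ := not_not.mp hG
      obtain ⟨-, x0, hx0, hx0n, hx00⟩ := hstd
      have hu := coeff_ord_ne hx0n
      rw [hx00] at hu
      exact ⟨r * x0, M0.smul_mem ⟨r, hr⟩ hx0, mul_ne_zero hr0 hx0n,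
        (ord_mul_unit hr0 hu).trans hrn⟩
  have hhigh : ∀ f : 𝒪, (PowerSeries.X : 𝒪) ^ (gp + 1) ∣ f → f ∈ M0 :=
    high_mem R c hR M0 hstd gp hDelta c (gp + 1) (by omega) (by omega)
  have hgDelta : gp ∉ DeltaM R M0 := fun hx => hgD ⟨hx, hg⟩
  have hX : (PowerSeries.X : 𝒪) ^ gp ∣ h :=
    PowerSeries.X_pow_dvd_iff.mpr (fun m hm => coeff_lt_ord (by omega))
  have hsup : (M0 ⊔ Submodule.span ↥R {h}).restrictScalars ℂ
      = M0.restrictScalars ℂ ⊔ (ℂ ∙ h) := by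
    apply le_antisymm
    · intro x hx
      obtain ⟨m, hm, y, hy, rfl⟩ := Submodule.mem_sup.mp
        ((Submodule.restrictScalars_mem ℂ _ _).mp hx)
      obtain ⟨r, rfl⟩ := Submodule.mem_span_singleton.mp hy
      set a : ℂ := PowerSeries.constantCoeff (r : 𝒪) with ha
      have h1 : ((r : 𝒪) - PowerSeries.C a) * h ∈ M0 := by
        apply hhigh
        rw [pow_succ, mul_comm (PowerSeries.X ^ gp)]
        exact mul_dvd_mul (PowerSeries.X_dvd_iff.mpr (by simp [ha])) hX
      refine Submodule.mem_sup.mpr ⟨m + ((r : 𝒪) - PowerSeries.C a) * h, M0.add_mem hm h1, a • h,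
        Submodule.mem_span_singleton.mpr ⟨a, rfl⟩, ?_⟩
      change _ = m + (r : 𝒪) * h
      rw [PowerSeries.smul_eq_C_mul]
      ring
    · apply sup_le
      · intro x hx
        exact Submodule.mem_sup_left (S := M0) hx
      · rw [Submodule.span_le, Set.singleton_subset_iff]
        exact Submodule.mem_sup_right (S := M0) (Submodule.mem_span_singleton_self h)
  have hDel : DeltaM R (M0 ⊔ Submodule.span ↥R {h}) = DeltaM R M0 ∪ {gp} := by
    ext n
    constructor
    · rintro ⟨x, hx, hx0, hxn⟩
      rcases lt_trichotomy n gp with hn | hn | hn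
      · left
        have hx' : x ∈ M0.restrictScalars ℂ ⊔ (ℂ ∙ h) := by
          rw [← hsup]; exact hx
        obtain ⟨m, hm, y, hy, rfl⟩ := Submodule.mem_sup.mp hx'
        obtain ⟨a, rfl⟩ := Submodule.mem_span_singleton.mp hy
        have hco : ∀ j < gp, PowerSeries.coeff j (m + a • h) = PowerSeries.coeff j m := by
          intro j hj
          have : PowerSeries.coeff j h = 0 := coeff_lt_ord (by omega)
          simp [this]
        have hne := coeff_ord_ne hx0
        rw [hxn, hco n hn] at hne
        refine ⟨m, hm, ne_zero_of_coeff hne, ord_eq_of hne fun j hj => ?_⟩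
        rw [← hco j (by omega)]
        exact coeff_lt_ord (by omega)
      · right; exact hn
      · left; exact hDelta n hn
    · rintro (⟨x, hx, hx0⟩ | hn)
      · exact ⟨x, Submodule.mem_sup_left hx, hx0⟩
      · rw [Set.mem_singleton_iff] at hn
        exact ⟨h, Submodule.mem_sup_right (Submodule.mem_span_singleton_self h), hh, by omega⟩
  refine ⟨hsup, fun hm => hgDelta ⟨h, hm, hh, hord⟩, ⟨?_, ?_⟩, hDel, ?_⟩
  · exact hstd.1.sup (Submodule.fg_span_singleton h)
  · obtain ⟨x, hx, hx0⟩ := hstd.2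
    exact ⟨x, Submodule.mem_sup_left hx, hx0⟩
  · unfold Dset
    rw [hDel, Set.union_inter_distrib_right,
      Set.inter_eq_left.mpr (Set.singleton_subset_iff.mpr hg)]

end
end

section
/- For all odd integers u, v with v > 2u > 4, the value semigroup {ν(f) : 0 ≠ f ∈ ℛ} of the subalgebra ℛ = ℂ[z^4, z^{2u}+z^v] + z^{4u+v}ℂ⟦z⟧ of ℂ⟦z⟧ equals the submonoid of ℕ generated by 4, 2u and 2u+v. -/
open PowerSeries

noncomputable section

lemma ord_spec (f : 𝒪) (hf : f ≠ 0) :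
    PowerSeries.coeff (ord f) f ≠ 0 ∧ ∀ m < ord f, PowerSeries.coeff m f = 0 := by
  have hne : {n : ℕ | PowerSeries.coeff n f ≠ 0}.Nonempty := by
    by_contra h
    apply hf
    ext n
    by_contra h'
    exact h ⟨n, h'⟩
  refine ⟨Nat.sInf_mem hne, fun m hm => ?_⟩
  by_contra h
  exact Nat.notMem_of_lt_sInf hm h

lemma ord_order (f : 𝒪) (hf : f ≠ 0) : f.order = (ord f : ℕ∞) :=
  PowerSeries.order_eq_nat.2 (ord_spec f hf)

lemma ord_of_order (f : 𝒪) (n : ℕ) (h : f.order = (n : ℕ∞)) : f ≠ 0 ∧ ord f = n := by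
  have hf : f ≠ 0 := by
    rintro rfl
    simp at h
  refine ⟨hf, ?_⟩
  rw [ord_order f hf] at h
  exact_mod_cast h

lemma ord_of_factor (f g : 𝒪) (n : ℕ) (h : f = PowerSeries.X ^ n * g)
    (hg : PowerSeries.coeff 0 g ≠ 0) : f ≠ 0 ∧ ord f = n := by
  apply ord_of_order
  rw [PowerSeries.order_eq_nat]
  subst h
  constructor
  · simpa [PowerSeries.coeff_X_pow_mul'] using hg
  · intro i hi
    rw [PowerSeries.coeff_X_pow_mul', if_neg (by omega)]

lemma SGamma_add (R : Subalgebra ℂ 𝒪) {a b : ℕ} (ha : a ∈ SGamma R) (hb : b ∈ SGamma R) :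
    a + b ∈ SGamma R := by
  obtain ⟨x, hx, hx0, rfl⟩ := ha
  obtain ⟨y, hy, hy0, rfl⟩ := hb
  refine ⟨x * y, mul_mem hx hy, mul_ne_zero hx0 hy0, ?_⟩
  refine (ord_of_order _ _ ?_).2
  rw [PowerSeries.order_mul, ord_order x hx0, ord_order y hy0]
  push_cast
  rfl

/-- Power series in `z^4`. -/
def IsE (f : 𝒪) : Prop := ∀ n, ¬ 4 ∣ n → PowerSeries.coeff n f = 0

lemma IsE.add {f g : 𝒪} (hf : IsE f) (hg : IsE g) : IsE (f + g) := by
  intro n hn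
  rw [map_add, hf n hn, hg n hn, add_zero]

lemma IsE.mul {f g : 𝒪} (hf : IsE f) (hg : IsE g) : IsE (f * g) := by
  intro n hn
  rw [PowerSeries.coeff_mul]
  apply Finset.sum_eq_zero
  rintro ⟨i, j⟩ hij
  rw [Finset.HasAntidiagonal.mem_antidiagonal] at hij
  simp only at hij ⊢
  by_cases hi : 4 ∣ i
  · rw [hg j (by omega), mul_zero]
  · rw [hf i hi, zero_mul]

lemma IsE_X_pow {n : ℕ} (h : 4 ∣ n) : IsE (PowerSeries.X ^ n) := by
  intro m hm
  rw [PowerSeries.coeff_X_pow, if_neg]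
  rintro rfl
  exact hm h

lemma IsE_algebraMap (r : ℂ) : IsE (algebraMap ℂ 𝒪 r) := by
  intro m hm
  have : m ≠ 0 := by rintro rfl; simp at hm
  simp [PowerSeries.coeff_C, this]

lemma IsE_zero : IsE 0 := fun _ _ => by simp

lemma struct_of_mem (u d : ℕ) (p : 𝒪)
    (hp : p ∈ Algebra.adjoin ℂ ({(PowerSeries.X : 𝒪)^4,
      (PowerSeries.X : 𝒪)^(2*u) + (PowerSeries.X : 𝒪)^(2*u+d)} : Set 𝒪)) :
    ∃ A B C h : 𝒪, IsE A ∧ IsE B ∧ IsE C ∧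
      p = A + B * (PowerSeries.X^(2*u) + PowerSeries.X^(2*u+d))
        + C * (2 * PowerSeries.X^(2*u+(2*u+d)) + PowerSeries.X^(2*(2*u+d)))
        + PowerSeries.X^(4*u+(2*u+d)) * h := by
  induction hp using Algebra.adjoin_induction with
  | mem x hx =>
    rcases hx with rfl | hx
    · exact ⟨_, 0, 0, 0, IsE_X_pow (dvd_refl 4), IsE_zero, IsE_zero, by ring⟩
    · rw [Set.mem_singleton_iff] at hx
      subst hx
      refine ⟨0, PowerSeries.X^0, 0, 0, IsE_zero, IsE_X_pow (dvd_zero 4), IsE_zero, by ring⟩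
  | algebraMap r => exact ⟨_, 0, 0, 0, IsE_algebraMap r, IsE_zero, IsE_zero, by ring⟩
  | add x y _ _ hx hy =>
    obtain ⟨A, B, C, h, hA, hB, hC, rfl⟩ := hx
    obtain ⟨A', B', C', h', hA', hB', hC', rfl⟩ := hy
    exact ⟨A + A', B + B', C + C', h + h', hA.add hA', hB.add hB', hC.add hC', by ring⟩
  | mul x y _ _ hx hy =>
    obtain ⟨A, B, C, h, hA, hB, hC, hx⟩ := hx
    obtain ⟨A', B', C', h', hA', hB', hC', hy⟩ := hy
    have e1 : (PowerSeries.X^(2*u) + PowerSeries.X^(2*u+d) : 𝒪)^2 = PowerSeries.X^(4*u)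
        + (2 * PowerSeries.X^(2*u+(2*u+d)) + PowerSeries.X^(2*(2*u+d))) := by ring
    have e2 : (PowerSeries.X^(2*u) + PowerSeries.X^(2*u+d) : 𝒪)
        * (2 * PowerSeries.X^(2*u+(2*u+d)) + PowerSeries.X^(2*(2*u+d)))
        = PowerSeries.X^(4*u+(2*u+d)) * (2 + 3 * PowerSeries.X^d + PowerSeries.X^(2*d)) := by
      ring
    have e3 : (2 * PowerSeries.X^(2*u+(2*u+d)) + PowerSeries.X^(2*(2*u+d)) : 𝒪)^2
        = PowerSeries.X^(4*u+(2*u+d)) * (PowerSeries.X^(2*u+d) * (2 + PowerSeries.X^d)^2) := by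
      ring
    generalize (PowerSeries.X^(2*u) + PowerSeries.X^(2*u+d) : 𝒪) = Y at *
    generalize (2 * PowerSeries.X^(2*u+(2*u+d)) + PowerSeries.X^(2*(2*u+d)) : 𝒪) = W at *
    generalize (PowerSeries.X^(4*u+(2*u+d)) : 𝒪) = Z at *
    generalize (2 + 3 * PowerSeries.X^d + PowerSeries.X^(2*d) : 𝒪) = P at *
    generalize (PowerSeries.X^(2*u+d) * (2 + PowerSeries.X^d)^2 : 𝒪) = Q at *
    have hE : IsE (PowerSeries.X^(4*u)) := IsE_X_pow ⟨u, rfl⟩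
    refine ⟨A * A' + B * B' * PowerSeries.X^(4*u), A * B' + B * A',
      A * C' + C * A' + B * B', h * y + (A + B * Y + C * W) * h' + (B * C' + C * B') * P
        + C * C' * Q, (hA.mul hA').add ((hB.mul hB').mul hE),
      (hA.mul hB').add (hB.mul hA'), ((hA.mul hC').add (hC.mul hA')).add (hB.mul hB'), ?_⟩
    rw [hx, hy]
    linear_combination B * B' * e1 + (B * C' + C * B') * e2 + C * C' * e3

lemma ord_cond (u d : ℕ) (hu : Odd u) (hd : Odd d) (A B C h f : 𝒪)
    (hA : IsE A) (hB : IsE B) (hC : IsE C)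
    (hf : f = A + B * (PowerSeries.X^(2*u) + PowerSeries.X^(2*u+d))
        + C * (2 * PowerSeries.X^(2*u+(2*u+d)) + PowerSeries.X^(2*(2*u+d)))
        + PowerSeries.X^(4*u+(2*u+d)) * h)
    (n : ℕ) (hn : PowerSeries.coeff n f ≠ 0) (hlt : ∀ m < n, PowerSeries.coeff m f = 0) :
    4 * u + (2 * u + d) ≤ n ∨ 4 ∣ n ∨ (n % 4 = 2 ∧ 2 * u ≤ n) ∨
      ((n + (2 * u + d)) % 4 = 0 ∧ 4 * u + d ≤ n) := by
  have key : ∀ m, m < 4 * u + (2 * u + d) → PowerSeries.coeff m f =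
      PowerSeries.coeff m A + ((if 2 * u ≤ m then PowerSeries.coeff (m - 2 * u) B else 0) +
        (if 2 * u + d ≤ m then PowerSeries.coeff (m - (2 * u + d)) B else 0)) +
      (2 * (if 2*u+(2*u+d) ≤ m then PowerSeries.coeff (m - (2*u+(2*u+d))) C else 0) +
        (if 2*(2*u+d) ≤ m then PowerSeries.coeff (m - (2*(2*u+d))) C else 0)) := by
    intro m hm
    have e : f = A + (B * PowerSeries.X^(2*u) + B * PowerSeries.X^(2*u+d))
        + ((C * PowerSeries.X^(2*u+(2*u+d)) + C * PowerSeries.X^(2*u+(2*u+d)))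
          + C * PowerSeries.X^(2*(2*u+d)))
        + PowerSeries.X^(4*u+(2*u+d)) * h := by rw [hf]; ring
    rw [e]
    simp only [map_add, PowerSeries.coeff_mul_X_pow', PowerSeries.coeff_X_pow_mul']
    rw [if_neg (show ¬ (4*u+(2*u+d) ≤ m) by omega)]
    ring
  obtain ⟨k, rfl⟩ := hu
  obtain ⟨l, rfl⟩ := hd
  by_contra hcon
  push Not at hcon
  obtain ⟨c1, c2, c3, c4⟩ := hcon
  -- vanishing helper
  have zB : ∀ m (b : ℕ), (b ≤ m → ¬ 4 ∣ (m - b)) →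
      (if b ≤ m then PowerSeries.coeff (m - b) B else 0) = 0 := by
    intro m b hb
    split_ifs with h1
    · exact hB _ (hb h1)
    · rfl
  have zC : ∀ m (b : ℕ), (b ≤ m → ¬ 4 ∣ (m - b)) →
      (if b ≤ m then PowerSeries.coeff (m - b) C else 0) = 0 := by
    intro m b hb
    split_ifs with h1
    · exact hC _ (hb h1)
    · rfl
  have hk := key n c1
  rw [hA n c2] at hk
  have hcases : n % 4 = 2 ∨ (n + (2 * (2*k+1) + (2*l+1))) % 4 = 0 ∨
      (n + (2*l+1)) % 4 = 0 := by omega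
  rcases hcases with h2 | h2 | h2
  · have := c3 h2
    rw [zB _ _ (by omega), zB _ _ (by omega), zC _ _ (by omega), zC _ _ (by omega)] at hk
    exact hn (by simpa using hk)
  · have := c4 h2
    rw [zB _ _ (by omega), zB _ _ (by omega), zC _ _ (by omega), zC _ _ (by omega)] at hk
    exact hn (by simpa using hk)
  · rw [zB n (2 * (2*k+1)) (by omega), zC _ _ (by omega), zC _ _ (by omega)] at hk
    by_cases hv : 2 * (2*k+1) + (2*l+1) ≤ n
    · rw [if_pos hv] at hk
      obtain ⟨m, rfl⟩ : ∃ m, n = m + (2*l+1) := ⟨n - (2*l+1), by omega⟩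
      have k1 := key m (by omega)
      rw [hlt m (by omega), hA m (by omega), if_pos (by omega), zB _ _ (by omega),
        zC m (2 * (2*k+1) + (2 * (2*k+1) + (2*l+1))) (by omega)] at k1
      have hCz : (if 2*(2 * (2*k+1) + (2*l+1)) ≤ m then
          PowerSeries.coeff (m - (2*(2 * (2*k+1) + (2*l+1)))) C else 0) = 0 := by
        split_ifs with h5
        · obtain ⟨q, rfl⟩ : ∃ q, m = q + (2*l+1) := ⟨m - (2*l+1), by omega⟩
          have k2 := key q (by omega)
          rw [hlt q (by omega), hA q (by omega), zB _ _ (by omega), zB _ _ (by omega),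
            if_pos (by omega), zC _ _ (by omega)] at k2
          rw [show q + (2*l+1) - 2*(2 * (2*k+1) + (2*l+1))
            = q - (2 * (2*k+1) + (2 * (2*k+1) + (2*l+1))) by omega]
          simpa using k2
        · rfl
      rw [hCz] at k1
      rw [show m + (2*l+1) - (2 * (2*k+1) + (2*l+1)) = m - 2 * (2*k+1) by omega] at hk
      apply hn
      rw [hk]
      simpa using k1.symm
    · rw [if_neg hv] at hk
      exact hn (by simpa using hk)

lemma mem_closure_of (u v a b c : ℕ) :
    a * 4 + b * (2*u) + c * (2*u+v) ∈ AddSubmonoid.closure ({4, 2*u, 2*u+v} : Set ℕ) := by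
  have h1 : 4 ∈ AddSubmonoid.closure ({4, 2*u, 2*u+v} : Set ℕ) :=
    AddSubmonoid.subset_closure (by simp)
  have h2 : 2*u ∈ AddSubmonoid.closure ({4, 2*u, 2*u+v} : Set ℕ) :=
    AddSubmonoid.subset_closure (by simp)
  have h3 : 2*u+v ∈ AddSubmonoid.closure ({4, 2*u, 2*u+v} : Set ℕ) :=
    AddSubmonoid.subset_closure (by simp)
  have := add_mem (add_mem (nsmul_mem h1 a) (nsmul_mem h2 b)) (nsmul_mem h3 c)
  simpa only [smul_eq_mul] using this

lemma mem_closure_of_eq (u v n a b c : ℕ) (h : n = a * 4 + b * (2*u) + c * (2*u+v)) :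
    n ∈ AddSubmonoid.closure ({4, 2*u, 2*u+v} : Set ℕ) := h ▸ mem_closure_of u v a b c

/-- For odd `u,v` with `v > 2u > 4`, the value semigroup of
`ℛ = ℂ[z^4, z^{2u}+z^v] + z^{4u+v}ℂ⟦z⟧` is the submonoid of `ℕ` generated by
`4`, `2u` and `2u+v`. -/
theorem statement15 (u v : ℕ) (hu : Odd u) (hv : Odd v)
    (h4 : 4 < 2*u) (huv : 2*u < v) :
    SGamma (Rcal u v) = ↑(AddSubmonoid.closure ({4, 2*u, 2*u+v} : Set ℕ)) := by
  obtain ⟨d, rfl⟩ : ∃ d, v = 2*u + d := ⟨v - 2*u, by omega⟩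
  have hd : Odd d := by
    rw [Nat.odd_iff] at *
    omega
  apply Set.Subset.antisymm
  · rintro n ⟨f, ⟨p, hp, g, hfp⟩, hf0, rfl⟩
    obtain ⟨A, B, C, h, hA, hB, hC, hpe⟩ := struct_of_mem u d p hp
    obtain ⟨hs1, hs2⟩ := ord_spec f hf0
    have hcond := ord_cond u d hu hd A B C (h + g) f hA hB hC (by rw [hfp, hpe]; ring) _ hs1 hs2
    generalize ord f = n at hcond
    rw [SetLike.mem_coe]
    have b0 : 4 ∣ n → n ∈ AddSubmonoid.closure ({4, 2*u, 2*u+(2*u+d)} : Set ℕ) := fun hh =>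
      mem_closure_of_eq u _ n (n/4) 0 0 (by omega)
    have b2 : n % 4 = 2 ∧ 2 * u ≤ n →
        n ∈ AddSubmonoid.closure ({4, 2*u, 2*u+(2*u+d)} : Set ℕ) := by
      rintro ⟨q1, q2⟩
      rw [Nat.odd_iff] at hu
      exact mem_closure_of_eq u _ n ((n-2*u)/4) 1 0 (by omega)
    have b3 : (n + (2 * u + d)) % 4 = 0 ∧ 4 * u + d ≤ n →
        n ∈ AddSubmonoid.closure ({4, 2*u, 2*u+(2*u+d)} : Set ℕ) := by
      rintro ⟨q1, q2⟩
      rw [Nat.odd_iff] at hu hd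
      exact mem_closure_of_eq u _ n ((n-(4*u+d))/4) 0 1 (by omega)
    rcases hcond with hc | hc | hc | hc
    · by_cases r0 : 4 ∣ n
      · exact b0 r0
      by_cases r2 : n % 4 = 2
      · exact b2 ⟨r2, by omega⟩
      by_cases r3 : (n + (2 * u + d)) % 4 = 0
      · exact b3 ⟨r3, by omega⟩
      rw [Nat.odd_iff] at hu hd
      exact mem_closure_of_eq u _ n ((n-(6*u+d))/4) 1 1 (by omega)
    · exact b0 hc
    · exact b2 hc
    · exact b3 hc
  · have hx : (PowerSeries.X : 𝒪)^4 ∈ Rcal u (2*u+d) :=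
      ⟨PowerSeries.X^4, Algebra.subset_adjoin (by simp), 0, by simp⟩
    have hy : (PowerSeries.X : 𝒪)^(2*u) + PowerSeries.X^(2*u+d) ∈ Rcal u (2*u+d) :=
      ⟨PowerSeries.X^(2*u) + PowerSeries.X^(2*u+d),
        Algebra.subset_adjoin (by simp), 0, by simp⟩
    have hd0 : d ≠ 0 := by omega
    intro n hn
    rw [SetLike.mem_coe] at hn
    induction hn using AddSubmonoid.closure_induction with
    | mem x hxm =>
      rcases hxm with rfl | rfl | hxm
      · exact ⟨_, hx, ord_of_factor _ 1 _ (by ring) (by simp)⟩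
      · exact ⟨_, hy, ord_of_factor _ (1 + PowerSeries.X^d) _ (by ring) (by simp [hd0])⟩
      · rw [Set.mem_singleton_iff] at hxm
        subst hxm
        exact ⟨_, sub_mem (pow_mem hy 2) (pow_mem hx u),
          ord_of_factor _ (1 + 1 + PowerSeries.X^d) _ (by ring) (by simp [hd0])⟩
    | zero => exact ⟨1, one_mem _, ord_of_factor _ 1 _ (by ring) (by simp)⟩
    | add x y _ _ hx hy => exact SGamma_add _ hx hy

end
end

section
/- Let ℛ = ℂ[z^4, z^6+z^7] + z^{16}ℂ⟦z⟧ with value semigroup Γ = ⟨4,6,13⟩ and gap set G = {1,2,3,5,7,9,11,15}. The admissible D-flags of length 3 are exactly the following three: D_0 = {9,11,15} with (g_1,g_2,g_3) = (2,5,7); D_0 = {7,9,11,15} with (g_1,g_2,g_3) = (2,3,5); and D_0 = {5,7,9,11,15} with (g_1,g_2,g_3) = (1,2,3). Moreover there is no admissible D-flag of length 4. -/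
open PowerSeries

noncomputable section

abbrev RR : Subalgebra ℂ 𝒪 := Rring 4 6 7 16

lemma ord_char (x : 𝒪) (n : ℕ) : (x ≠ 0 ∧ ord x = n) ↔
    (coeff n x ≠ 0 ∧ ∀ m < n, coeff m x = 0) := by
  constructor
  · rintro ⟨hx, rfl⟩
    have hne : {n : ℕ | PowerSeries.coeff n x ≠ 0}.Nonempty := by
      by_contra h
      rw [Set.not_nonempty_iff_eq_empty] at h
      apply hx
      ext n
      by_contra h2
      have : n ∈ {n : ℕ | PowerSeries.coeff n x ≠ 0} := by simpa using h2
      rw [h] at this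
      exact this
    refine ⟨Nat.sInf_mem hne, fun m hm => ?_⟩
    by_contra h2
    exact Nat.notMem_of_lt_sInf hm h2
  · rintro ⟨h1, h2⟩
    refine ⟨fun h => h1 (by simp [h]), le_antisymm (Nat.sInf_le h1) ?_⟩
    by_contra h
    push Not at h
    have hm : ord x ∈ {n : ℕ | PowerSeries.coeff n x ≠ 0} := Nat.sInf_mem ⟨n, h1⟩
    exact hm (h2 _ h)

/-- The linear conditions cutting out the ring. -/
def RC (f : 𝒪) : Prop := coeff 1 f = 0 ∧ coeff 2 f = 0 ∧ coeff 3 f = 0 ∧ coeff 5 f = 0 ∧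
  coeff 7 f = coeff 6 f ∧ coeff 9 f = 0 ∧ coeff 11 f = coeff 10 f ∧
  2 * coeff 15 f = 2 * coeff 14 f - coeff 13 f

lemma coeff_mul_range (n : ℕ) (f g : 𝒪) : coeff n (f * g) =
    ∑ k ∈ Finset.range (n + 1), coeff k f * coeff (n - k) g := by
  rw [coeff_mul, Finset.Nat.sum_antidiagonal_eq_sum_range_succ_mk]

lemma RC_mul {f g : 𝒪} (hf : RC f) (hg : RC g) : RC (f * g) := by
  obtain ⟨f1, f2, f3, f5, f7, f9, f11, f15⟩ := hf
  obtain ⟨g1, g2, g3, g5, g7, g9, g11, g15⟩ := hg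
  simp only [RC, coeff_mul_range, Finset.sum_range_succ, Finset.sum_range_zero, Nat.reduceSub,
    Nat.sub_self, Nat.sub_zero, f1, f2, f3, f5, f7, f9, f11, g1, g2, g3, g5, g7, g9, g11]
  refine ⟨by ring, by ring, by ring, by ring, by ring, by ring, by ring, ?_⟩
  linear_combination (coeff 0 f) * g15 + (coeff 0 g) * f15

lemma RC_add {f g : 𝒪} (hf : RC f) (hg : RC g) : RC (f + g) := by
  obtain ⟨f1, f2, f3, f5, f7, f9, f11, f15⟩ := hf
  obtain ⟨g1, g2, g3, g5, g7, g9, g11, g15⟩ := hg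
  simp only [RC, map_add, f1, f2, f3, f5, f7, f9, f11, g1, g2, g3, g5, g7, g9, g11]
  refine ⟨by ring, by ring, by ring, by ring, trivial, by ring, trivial, ?_⟩
  linear_combination g15 + f15

lemma RC_of_mem {f : 𝒪} (hf : f ∈ RR) : RC f := by
  obtain ⟨p, hp, g, rfl⟩ := hf
  refine RC_add ?_ (by simp [RC, coeff_X_pow_mul'])
  induction hp using Algebra.adjoin_induction with
  | mem x hx =>
    rcases hx with rfl | rfl <;> simp [RC, coeff_X_pow]
  | algebraMap r => simp [RC]
  | add x y _ _ hx hy => exact RC_add hx hy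
  | mul x y _ _ hx hy => exact RC_mul hx hy

lemma x_mem : (X : 𝒪) ^ 4 ∈ RR :=
  ⟨_, Algebra.subset_adjoin (Set.mem_insert _ _), 0, by ring⟩

lemma y_mem : (X : 𝒪) ^ 6 + X ^ 7 ∈ RR :=
  ⟨_, Algebra.subset_adjoin (Set.mem_insert_of_mem _ rfl), 0, by ring⟩

lemma c_mem (f : 𝒪) : (X : 𝒪) ^ 16 * f ∈ RR := ⟨0, zero_mem _, f, by ring⟩

lemma ord_mul_unit_s18 (n : ℕ) (u : 𝒪) (hu : coeff 0 u ≠ 0) :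
    (X : 𝒪) ^ n * u ≠ 0 ∧ ord ((X : 𝒪) ^ n * u) = n := by
  rw [ord_char]
  refine ⟨by simpa [coeff_X_pow_mul'] using hu, fun m hm => ?_⟩
  rw [coeff_X_pow_mul', if_neg (by omega)]

lemma gamma_of {n : ℕ} (u : 𝒪) (hu : coeff 0 u ≠ 0) (h : (X : 𝒪) ^ n * u ∈ RR) :
    n ∈ SGamma RR := ⟨_, h, ord_mul_unit_s18 n u hu⟩

lemma mem_gamma (n : ℕ) : n ∈ SGamma RR ↔
    (n = 0 ∨ n = 4 ∨ n = 6 ∨ n = 8 ∨ n = 10 ∨ n = 12 ∨ n = 13 ∨ n = 14 ∨ 16 ≤ n) := by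
  constructor
  · rintro ⟨f, hf, h⟩
    rw [ord_char] at h
    obtain ⟨h0, h⟩ := h
    obtain ⟨f1, f2, f3, f5, f7, f9, f11, f15⟩ := RC_of_mem hf
    by_contra hn
    have : n = 1 ∨ n = 2 ∨ n = 3 ∨ n = 5 ∨ n = 7 ∨ n = 9 ∨ n = 11 ∨ n = 15 := by omega
    rcases this with rfl | rfl | rfl | rfl | rfl | rfl | rfl | rfl
    · exact h0 f1
    · exact h0 f2
    · exact h0 f3
    · exact h0 f5
    · exact h0 (f7.trans (h 6 (by norm_num)))
    · exact h0 f9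
    · exact h0 (f11.trans (h 10 (by norm_num)))
    · rw [h 13 (by norm_num), h 14 (by norm_num)] at f15
      apply h0
      linear_combination f15 / 2
  · have x := x_mem
    have y := y_mem
    rintro (rfl | rfl | rfl | rfl | rfl | rfl | rfl | rfl | h)
    · exact gamma_of 1 (by simp) (by simpa using one_mem RR)
    · exact gamma_of 1 (by simp) (by simpa using x)
    · exact gamma_of (1 + X) (by simp) (by convert y using 1; ring)
    · exact gamma_of 1 (by simp) (by convert mul_mem x x using 1; ring)
    · exact gamma_of (1 + X) (by simp) (by convert mul_mem x y using 1; ring)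
    · exact gamma_of 1 (by simp) (by convert mul_mem x (mul_mem x x) using 1; ring)
    · exact gamma_of (2 + X) (by rw [coeff_zero_eq_constantCoeff, map_add, map_ofNat]; simp)
        (by convert sub_mem (mul_mem y y) (mul_mem x (mul_mem x x)) using 1; ring)
    · exact gamma_of (1 + X) (by simp) (by convert mul_mem x (mul_mem x y) using 1; ring)
    · refine gamma_of 1 (by simp) ?_
      convert c_mem (X ^ (n - 16)) using 1
      rw [mul_one, ← pow_add]
      congr 1
      omega

lemma mem_gaps (n : ℕ) : n ∈ Gaps RR ↔
    (n = 1 ∨ n = 2 ∨ n = 3 ∨ n = 5 ∨ n = 7 ∨ n = 9 ∨ n = 11 ∨ n = 15) := by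
  rw [Gaps, Set.mem_compl_iff, mem_gamma]
  omega

lemma mem_flagSet (D0 : Set ℕ) (g : ℕ → ℕ) (i n : ℕ) :
    n ∈ DFlagSet D0 g i ↔ (n ∈ D0 ∨ ∃ k, (1 ≤ k ∧ k ≤ i) ∧ g k = n) := by
  simp [DFlagSet]

/-- If `2` is added, so is one of `7`, `9`. -/
lemma key {M : Submodule ↥RR 𝒪} (hM : IsStd RR M) (h2 : 2 ∈ Dset RR M)
    (h7 : 7 ∉ Dset RR M) (h9 : 9 ∉ Dset RR M) : False := by
  obtain ⟨-, m, hm, hm0⟩ := hM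
  obtain ⟨⟨p, hp, hp0⟩, -⟩ := h2
  rw [ord_char] at hm0 hp0
  obtain ⟨ha, -⟩ := hm0
  obtain ⟨hb, hb'⟩ := hp0
  have hp00 := hb' 0 (by norm_num)
  have hp01 := hb' 1 (by norm_num)
  have hmul : ∀ r ∈ RR, ∀ f ∈ M, r * f ∈ M := fun r hr f hf => M.smul_mem ⟨r, hr⟩ hf
  have hC : ∀ (c : ℂ), ∀ f ∈ M, C c * f ∈ M := fun c f hf =>
    hmul _ (RR.algebraMap_mem c) f hf
  have e1 : coeff 2 p * (coeff 1 m + coeff 0 m) - coeff 0 m * coeff 3 p = 0 := by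
    by_contra hne
    apply h7
    refine ⟨⟨_, sub_mem (hC (coeff 2 p) _ (hmul _ y_mem _ hm))
      (hC (coeff 0 m) _ (hmul _ x_mem _ hp)), ?_⟩, by rw [mem_gaps]; omega⟩
    rw [ord_char]
    constructor
    · intro h
      apply hne
      rw [← h]
      simp [add_mul, coeff_X_pow_mul', coeff_C_mul]
    · intro k hk
      interval_cases k <;>
        simp [add_mul, coeff_X_pow_mul', coeff_C_mul, -coeff_zero_eq_constantCoeff, hp00, hp01]
      ring
  have e2 : coeff 0 m * (coeff 3 p + coeff 2 p) - coeff 2 p * coeff 1 m = 0 := by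
    by_contra hne
    apply h9
    refine ⟨⟨_, sub_mem (hC (coeff 0 m) _ (hmul _ y_mem _ hp))
      (hC (coeff 2 p) _ (hmul _ x_mem _ (hmul _ x_mem _ hm))), ?_⟩, by rw [mem_gaps]; omega⟩
    rw [ord_char]
    constructor
    · intro h
      apply hne
      rw [← h]
      simp [add_mul, coeff_X_pow_mul', coeff_C_mul]
    · intro k hk
      interval_cases k <;>
        simp [add_mul, coeff_X_pow_mul', coeff_C_mul, -coeff_zero_eq_constantCoeff, hp00, hp01]
      ring
  have : coeff 0 m * coeff 2 p = 0 := by linear_combination (e1 + e2) / 2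
  exact (mul_ne_zero ha hb) this

lemma fg_of_one_mem (M : Submodule ↥RR 𝒪) (h1 : (1 : 𝒪) ∈ M) : M.FG := by
  classical
  let T : 𝒪 →ₗ[ℂ] (Fin 16 → ℂ) := LinearMap.pi (fun i => coeff (i : ℕ))
  have hC : ∀ (c : ℂ), ∀ f ∈ M, c • f ∈ M := fun c f hf => by
    rw [smul_eq_C_mul]
    exact M.smul_mem ⟨_, RR.algebraMap_mem c⟩ hf
  let N : Submodule ℂ 𝒪 :=
    { carrier := M, add_mem' := fun a b => M.add_mem a b, zero_mem' := M.zero_mem,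
      smul_mem' := fun c f hf => hC c f hf }
  have hfg : (N.map T).FG := IsNoetherian.noetherian _
  obtain ⟨s, hs⟩ := hfg
  have hsub : (s : Set (Fin 16 → ℂ)) ⊆ T '' (N : Set 𝒪) := by
    rw [← Submodule.map_coe, ← hs]
    exact Submodule.subset_span
  obtain ⟨t, ht, hts⟩ := Finset.subset_set_image_iff.1 hsub
  refine ⟨insert 1 t, le_antisymm ?_ ?_⟩
  · rw [Submodule.span_le]
    intro f hf
    rcases Finset.mem_insert.1 (Finset.mem_coe.1 hf) with rfl | hf
    · exact h1
    · exact ht hf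
  · intro f hf
    have hTf : T f ∈ N.map T := ⟨f, hf, rfl⟩
    rw [← hs, ← hts, Finset.coe_image, Submodule.span_image] at hTf
    obtain ⟨h, hh, hTh⟩ := hTf
    have hhM : h ∈ Submodule.span (↥RR) ((insert 1 t : Finset 𝒪) : Set 𝒪) := by
      clear hTh
      induction hh using Submodule.span_induction with
      | mem x hx => exact Submodule.subset_span (Finset.mem_coe.2 (Finset.mem_insert_of_mem hx))
      | zero => exact zero_mem _
      | add x y _ _ hx hy => exact add_mem hx hy
      | smul c x _ hx =>
        rw [smul_eq_C_mul]
        exact Submodule.smul_mem _ (⟨_, RR.algebraMap_mem c⟩ : ↥RR) hx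
    have hd : (X : 𝒪) ^ 16 ∣ f - h := by
      rw [X_pow_dvd_iff]
      intro m hm
      have := congrFun hTh ⟨m, hm⟩
      simp only [T, LinearMap.pi_apply] at this
      rw [map_sub, this, sub_self]
    obtain ⟨k, hk⟩ := hd
    have : f = h + (X : 𝒪) ^ 16 * k * 1 := by rw [mul_one, ← hk]; ring
    rw [this]
    refine add_mem hhM (Submodule.smul_mem _ (⟨_, c_mem k⟩ : ↥RR) ?_)
    exact Submodule.subset_span (by simp)

/-- An `ℛ`-submodule cut out by a predicate. -/
def modOf (P : 𝒪 → Prop) (h0 : P 0) (ha : ∀ f g, P f → P g → P (f + g))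
    (hs : ∀ r, RC r → ∀ f, P f → P (r * f)) : Submodule ↥RR 𝒪 where
  carrier := {f | P f}
  zero_mem' := h0
  add_mem' := fun {a b} h1 h2 => ha a b h1 h2
  smul_mem' := fun c f hf => hs c.1 (RC_of_mem c.2) f hf

lemma admissible_of (P : ℕ → 𝒪 → Prop) (h0 : ∀ i, P i 0)
    (ha : ∀ i f g, P i f → P i g → P i (f + g))
    (hs : ∀ i r, RC r → ∀ f, P i f → P i (r * f))
    (hmono : ∀ i f, P i f → P (i + 1) f) (h1 : ∀ i, P i 1) (D0 : Set ℕ) (g : ℕ → ℕ)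
    (hD1 : ∀ i ≤ 3, ∀ n ∈ Gaps RR, ∀ f, P i f → coeff n f ≠ 0 → (∀ m < n, coeff m f = 0) →
      n ∈ DFlagSet D0 g i)
    (hD2 : ∀ i ≤ 3, ∀ n ∈ DFlagSet D0 g i, n ∈ Gaps RR ∧
      ∃ u, P i (X ^ n * u) ∧ coeff 0 u ≠ 0) :
    IsAdmissibleFlag RR 3 D0 g := by
  refine ⟨fun i => modOf (P i) (h0 i) (ha i) (hs i), fun i _ f hf => hmono i f hf,
    fun i hi => ⟨⟨fg_of_one_mem _ (h1 i), 1, h1 i, ?_⟩, ?_⟩⟩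
  · rw [ord_char]; simp
  · ext n
    constructor
    · rintro ⟨⟨f, hf, h⟩, hn⟩
      rw [ord_char] at h
      exact hD1 i hi n hn f hf h.1 h.2
    · intro hn
      obtain ⟨hG, u, hu, hu0⟩ := hD2 i hi n hn
      exact ⟨⟨_, hu, ord_mul_unit_s18 n u hu0⟩, hG⟩

lemma flag_mem {D0 : Set ℕ} {g : ℕ → ℕ} {a b c : ℕ} (h1 : g 1 = a) (h2 : g 2 = b) (h3 : g 3 = c)
    {i : ℕ} (hi : i ≤ 3) (n : ℕ) : n ∈ DFlagSet D0 g i ↔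
      (n ∈ D0 ∨ (1 ≤ i ∧ n = a) ∨ (2 ≤ i ∧ n = b) ∨ (3 ≤ i ∧ n = c)) := by
  rw [mem_flagSet]
  constructor
  · rintro (h | ⟨k, ⟨hk1, hk2⟩, rfl⟩)
    · exact Or.inl h
    · have : k = 1 ∨ k = 2 ∨ k = 3 := by omega
      rcases this with rfl | rfl | rfl
      · exact Or.inr (Or.inl ⟨hk2, h1⟩)
      · exact Or.inr (Or.inr (Or.inl ⟨hk2, h2⟩))
      · exact Or.inr (Or.inr (Or.inr ⟨hk2, h3⟩))
  · rintro (h | ⟨h, rfl⟩ | ⟨h, rfl⟩ | ⟨h, rfl⟩)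
    · exact Or.inl h
    · exact Or.inr ⟨1, ⟨by omega, by omega⟩, h1⟩
    · exact Or.inr ⟨2, ⟨by omega, by omega⟩, h2⟩
    · exact Or.inr ⟨3, ⟨by omega, by omega⟩, h3⟩

lemma flag_of {D0 : Set ℕ} {g : ℕ → ℕ} {a b c : ℕ} (h1 : g 1 = a) (h2 : g 2 = b) (h3 : g 3 = c)
    (hab : a < b) (hbc : b < c) (ha : a ∈ Gaps RR \ D0) (hb : b ∈ Gaps RR \ D0)
    (hc : c ∈ Gaps RR \ D0) (hD : D0 ⊆ Gaps RR)
    (hup : ∀ s ∈ SGamma RR, s ≠ 0 → ∀ d, (d ∈ D0 ∨ d = a ∨ d = b ∨ d = c) →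
      s + d ∈ SGamma RR ∨ s + d ∈ D0) : IsDFlag RR 3 D0 g := by
  refine ⟨hD, ?_, ?_, ?_⟩
  · rintro i ⟨hi1, hi2⟩ j ⟨hj1, hj2⟩ hij
    have : (i = 1 ∧ j = 2) ∨ (i = 1 ∧ j = 3) ∨ (i = 2 ∧ j = 3) := by omega
    rcases this with ⟨rfl, rfl⟩ | ⟨rfl, rfl⟩ | ⟨rfl, rfl⟩ <;> omega
  · intro i hi1 hi2
    have : i = 1 ∨ i = 2 ∨ i = 3 := by omega
    rcases this with rfl | rfl | rfl
    · rwa [h1]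
    · rwa [h2]
    · rwa [h3]
  · intro i hi s hs d hd
    by_cases hs0 : s = 0
    · subst hs0; rwa [zero_add]
    rcases hd with hd | hd
    · left
      rw [mem_gamma] at hs hd ⊢
      omega
    · have := (flag_mem h1 h2 h3 hi d).1 hd
      rcases hup s hs hs0 d (by tauto) with h | h
      · exact Or.inl h
      · exact Or.inr ((flag_mem h1 h2 h3 hi _).2 (Or.inl h))

lemma flag_case1 (g : ℕ → ℕ) (h1 : g 1 = 2) (h2 : g 2 = 5) (h3 : g 3 = 7) :
    IsDFlag RR 3 {9, 11, 15} g ∧ IsAdmissibleFlag RR 3 {9, 11, 15} g := by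
  constructor
  · refine flag_of h1 h2 h3 (by omega) (by omega) ?_ ?_ ?_ ?_ ?_
    · simp [mem_gaps]
    · simp [mem_gaps]
    · simp [mem_gaps]
    · intro n; simp only [mem_gaps, Set.mem_insert_iff, Set.mem_singleton_iff]; omega
    · intro s hs hs0 d hd
      simp only [mem_gamma, Set.mem_insert_iff, Set.mem_singleton_iff] at *
      rcases hd with (rfl | rfl | rfl) | rfl | rfl | rfl <;> omega
  · refine admissible_of (fun i f => coeff 1 f = 0 ∧ (i < 1 → coeff 2 f = 0) ∧
      coeff 3 f = coeff 2 f ∧ (i < 2 → coeff 5 f = 0) ∧ (i < 3 → coeff 7 f = coeff 6 f))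
      ?_ ?_ ?_ ?_ ?_ _ _ ?_ ?_
    · simp
    · rintro i f g ⟨a1, a2, a3, a4, a5⟩ ⟨b1, b2, b3, b4, b5⟩
      simp only [map_add]
      refine ⟨by rw [a1, b1, add_zero], fun h => by rw [a2 h, b2 h, add_zero], by rw [a3, b3],
        fun h => by rw [a4 h, b4 h, add_zero], fun h => by rw [a5 h, b5 h]⟩
    · rintro i r ⟨r1, r2, r3, r5, r7, -⟩ f ⟨a1, a2, a3, a4, a5⟩
      simp only [coeff_mul_range, Finset.sum_range_succ, Finset.sum_range_zero, Nat.reduceSub,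
        Nat.sub_self, Nat.sub_zero, r1, r2, r3, r5, r7, a1, a3]
      refine ⟨by ring, fun h => by rw [a2 h]; ring, by ring, fun h => by rw [a4 h]; ring,
        fun h => by rw [a5 h]; ring⟩
    · rintro i f ⟨a1, a2, a3, a4, a5⟩
      exact ⟨a1, fun h => a2 (by omega), a3, fun h => a4 (by omega), fun h => a5 (by omega)⟩
    · intro i; simp [coeff_one]
    · rintro i hi n hn f ⟨a1, a2, a3, a4, a5⟩ hf hm
      rw [mem_gaps] at hn
      rw [flag_mem h1 h2 h3 hi]
      simp only [Set.mem_insert_iff, Set.mem_singleton_iff]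
      by_contra hcon
      apply hf
      rcases hn with rfl | rfl | rfl | rfl | rfl | rfl | rfl | rfl
      · exact a1
      · exact a2 (by omega)
      · exact a3.trans (hm 2 (by omega))
      · exact a4 (by omega)
      · exact (a5 (by omega)).trans (hm 6 (by omega))
      all_goals omega
    · intro i hi n hn
      rw [flag_mem h1 h2 h3 hi] at hn
      simp only [Set.mem_insert_iff, Set.mem_singleton_iff] at hn
      refine ⟨by rw [mem_gaps]; omega, if n = 2 then 1 + X else 1, ?_, by split_ifs <;> simp⟩
      rcases hn with (rfl | rfl | rfl) | ⟨h, rfl⟩ | ⟨h, rfl⟩ | ⟨h, rfl⟩ <;>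
        simp [coeff_X_pow, coeff_X_pow_mul', coeff_one, coeff_X] <;> omega

lemma flag_case2 (g : ℕ → ℕ) (h1 : g 1 = 2) (h2 : g 2 = 3) (h3 : g 3 = 5) :
    IsDFlag RR 3 {7, 9, 11, 15} g ∧ IsAdmissibleFlag RR 3 {7, 9, 11, 15} g := by
  constructor
  · refine flag_of h1 h2 h3 (by omega) (by omega) ?_ ?_ ?_ ?_ ?_
    · simp [mem_gaps]
    · simp [mem_gaps]
    · simp [mem_gaps]
    · intro n; simp only [mem_gaps, Set.mem_insert_iff, Set.mem_singleton_iff]; omega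
    · intro s hs hs0 d hd
      simp only [mem_gamma, Set.mem_insert_iff, Set.mem_singleton_iff] at *
      rcases hd with (rfl | rfl | rfl | rfl) | rfl | rfl | rfl <;> omega
  · refine admissible_of (fun i f => coeff 1 f = 0 ∧ (i < 1 → coeff 2 f = 0) ∧
      (i < 2 → coeff 3 f = 0) ∧ (i < 3 → coeff 5 f = 0))
      ?_ ?_ ?_ ?_ ?_ _ _ ?_ ?_
    · simp
    · rintro i f g ⟨a1, a2, a3, a4⟩ ⟨b1, b2, b3, b4⟩
      simp only [map_add]
      refine ⟨by rw [a1, b1, add_zero], fun h => by rw [a2 h, b2 h, add_zero],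
        fun h => by rw [a3 h, b3 h, add_zero], fun h => by rw [a4 h, b4 h, add_zero]⟩
    · rintro i r ⟨r1, r2, r3, r5, r7, -⟩ f ⟨a1, a2, a3, a4⟩
      simp only [coeff_mul_range, Finset.sum_range_succ, Finset.sum_range_zero, Nat.reduceSub,
        Nat.sub_self, Nat.sub_zero, r1, r2, r3, r5, r7, a1]
      refine ⟨by ring, fun h => by rw [a2 h]; ring, fun h => by rw [a3 h]; ring,
        fun h => by rw [a4 h]; ring⟩
    · rintro i f ⟨a1, a2, a3, a4⟩
      exact ⟨a1, fun h => a2 (by omega), fun h => a3 (by omega), fun h => a4 (by omega)⟩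
    · intro i; simp [coeff_one]
    · rintro i hi n hn f ⟨a1, a2, a3, a4⟩ hf hm
      rw [mem_gaps] at hn
      rw [flag_mem h1 h2 h3 hi]
      simp only [Set.mem_insert_iff, Set.mem_singleton_iff]
      by_contra hcon
      apply hf
      rcases hn with rfl | rfl | rfl | rfl | rfl | rfl | rfl | rfl
      · exact a1
      · exact a2 (by omega)
      · exact a3 (by omega)
      · exact a4 (by omega)
      all_goals omega
    · intro i hi n hn
      rw [flag_mem h1 h2 h3 hi] at hn
      simp only [Set.mem_insert_iff, Set.mem_singleton_iff] at hn
      refine ⟨by rw [mem_gaps]; omega, 1, ?_, by simp⟩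
      rcases hn with (rfl | rfl | rfl | rfl) | ⟨h, rfl⟩ | ⟨h, rfl⟩ | ⟨h, rfl⟩ <;>
        simp [coeff_X_pow] <;> omega

lemma flag_case3 (g : ℕ → ℕ) (h1 : g 1 = 1) (h2 : g 2 = 2) (h3 : g 3 = 3) :
    IsDFlag RR 3 {5, 7, 9, 11, 15} g ∧ IsAdmissibleFlag RR 3 {5, 7, 9, 11, 15} g := by
  constructor
  · refine flag_of h1 h2 h3 (by omega) (by omega) ?_ ?_ ?_ ?_ ?_
    · simp [mem_gaps]
    · simp [mem_gaps]
    · simp [mem_gaps]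
    · intro n; simp only [mem_gaps, Set.mem_insert_iff, Set.mem_singleton_iff]; omega
    · intro s hs hs0 d hd
      simp only [mem_gamma, Set.mem_insert_iff, Set.mem_singleton_iff] at *
      rcases hd with (rfl | rfl | rfl | rfl | rfl) | rfl | rfl | rfl <;> omega
  · refine admissible_of (fun i f => (i < 1 → coeff 1 f = 0) ∧ (i < 2 → coeff 2 f = 0) ∧
      (i < 3 → coeff 3 f = 0))
      ?_ ?_ ?_ ?_ ?_ _ _ ?_ ?_
    · simp
    · rintro i f g ⟨a1, a2, a3⟩ ⟨b1, b2, b3⟩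
      simp only [map_add]
      refine ⟨fun h => by rw [a1 h, b1 h, add_zero], fun h => by rw [a2 h, b2 h, add_zero],
        fun h => by rw [a3 h, b3 h, add_zero]⟩
    · rintro i r ⟨r1, r2, r3, r5, r7, -⟩ f ⟨a1, a2, a3⟩
      simp only [coeff_mul_range, Finset.sum_range_succ, Finset.sum_range_zero, Nat.reduceSub,
        Nat.sub_self, Nat.sub_zero, r1, r2, r3]
      refine ⟨fun h => by rw [a1 h]; ring, fun h => by rw [a2 h]; ring,
        fun h => by rw [a3 h]; ring⟩
    · rintro i f ⟨a1, a2, a3⟩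
      exact ⟨fun h => a1 (by omega), fun h => a2 (by omega), fun h => a3 (by omega)⟩
    · intro i; simp [coeff_one]
    · rintro i hi n hn f ⟨a1, a2, a3⟩ hf hm
      rw [mem_gaps] at hn
      rw [flag_mem h1 h2 h3 hi]
      simp only [Set.mem_insert_iff, Set.mem_singleton_iff]
      by_contra hcon
      apply hf
      rcases hn with rfl | rfl | rfl | rfl | rfl | rfl | rfl | rfl
      · exact a1 (by omega)
      · exact a2 (by omega)
      · exact a3 (by omega)
      all_goals omega
    · intro i hi n hn
      rw [flag_mem h1 h2 h3 hi] at hn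
      simp only [Set.mem_insert_iff, Set.mem_singleton_iff] at hn
      refine ⟨by rw [mem_gaps]; omega, 1, ?_, by simp⟩
      rcases hn with (rfl | rfl | rfl | rfl | rfl) | ⟨h, rfl⟩ | ⟨h, rfl⟩ | ⟨h, rfl⟩ <;>
        simp [coeff_X_pow, coeff_X] <;> omega

/-- Combinatorial consequences of being a `D`-flag. -/
lemma flag_up {m : ℕ} {D0 : Set ℕ} {g : ℕ → ℕ} (h : IsDFlag RR m D0 g) {i : ℕ} (hi1 : 1 ≤ i)
    (him : i ≤ m) {a : ℕ} (ha : a ∈ SGamma RR) (ha0 : 0 < a) (hG : a + g i ∈ Gaps RR) :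
    a + g i ∈ D0 := by
  obtain ⟨-, hmono, -, hΓ⟩ := h
  rcases hΓ i him a ha (g i) (Or.inr ((mem_flagSet _ _ _ _).2 (Or.inr ⟨i, ⟨hi1, le_rfl⟩, rfl⟩)))
    with h | h
  · exact absurd h hG
  · rcases (mem_flagSet _ _ _ _).1 h with h | ⟨k, ⟨hk1, hk2⟩, hk⟩
    · exact h
    · have := hmono.monotoneOn (⟨hk1, hk2.trans him⟩ : k ∈ Set.Icc 1 m)
        (⟨hi1, him⟩ : i ∈ Set.Icc 1 m) hk2
      omega

lemma flag_up0 {m : ℕ} {D0 : Set ℕ} {g : ℕ → ℕ} (h : IsDFlag RR m D0 g) {d a : ℕ}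
    (hd : d ∈ D0) (ha : a ∈ SGamma RR) (hG : a + d ∈ Gaps RR) : a + d ∈ D0 := by
  obtain ⟨-, -, -, hΓ⟩ := h
  rcases hΓ 0 (Nat.zero_le _) a ha d (Or.inr (Or.inl hd)) with h | h
  · exact absurd h hG
  · rcases (mem_flagSet _ _ _ _).1 h with h | ⟨k, ⟨hk1, hk2⟩, hk⟩
    · exact h
    · omega

/-- `y` is not above `x`. -/
def Inc (x y : ℕ) : Prop := x < y ∧ 4 + x ≠ y ∧ 6 + x ≠ y ∧ 8 + x ≠ y ∧ 10 + x ≠ y ∧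
  12 + x ≠ y ∧ 13 + x ≠ y ∧ 14 + x ≠ y

lemma flag_inc {m : ℕ} {D0 : Set ℕ} {g : ℕ → ℕ} (h : IsDFlag RR m D0 g) {i j : ℕ} (hi1 : 1 ≤ i)
    (hij : i < j) (hjm : j ≤ m) : Inc (g i) (g j) := by
  have hj := h.2.2.1 j (by omega) hjm
  have key : ∀ a, a ∈ SGamma RR → 0 < a → a + g i ≠ g j := by
    intro a ha ha0 he
    apply hj.2
    rw [← he]
    exact flag_up h hi1 (by omega) ha ha0 (he ▸ hj.1)
  refine ⟨h.2.1 ⟨hi1, by omega⟩ ⟨by omega, hjm⟩ hij, key _ ?_ ?_, key _ ?_ ?_, key _ ?_ ?_,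
    key _ ?_ ?_, key _ ?_ ?_, key _ ?_ ?_, key _ ?_ ?_⟩ <;> simp [mem_gamma]

instance (x y : ℕ) : Decidable (Inc x y) := by
  unfold Inc
  infer_instance

set_option maxRecDepth 10000 in
lemma triple_dec : ∀ x ∈ [1, 2, 3, 5, 7, 9, 11, 15], ∀ y ∈ [1, 2, 3, 5, 7, 9, 11, 15],
    Inc x y → ∀ z ∈ [1, 2, 3, 5, 7, 9, 11, 15], Inc x z → Inc y z →
    (x = 1 ∧ y = 2 ∧ z = 3) ∨ (x = 2 ∧ y = 3 ∧ z = 5) ∨ (x = 2 ∧ y = 5 ∧ z = 7) ∨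
    (x = 2 ∧ y = 7 ∧ z = 9) ∨ (x = 2 ∧ y = 9 ∧ z = 11) := by
  decide

lemma triple {x y z : ℕ} (hx : x ∈ Gaps RR) (hy : y ∈ Gaps RR) (hz : z ∈ Gaps RR)
    (hxy : Inc x y) (hxz : Inc x z) (hyz : Inc y z) :
    (x = 1 ∧ y = 2 ∧ z = 3) ∨ (x = 2 ∧ y = 3 ∧ z = 5) ∨ (x = 2 ∧ y = 5 ∧ z = 7) ∨
    (x = 2 ∧ y = 7 ∧ z = 9) ∨ (x = 2 ∧ y = 9 ∧ z = 11) := by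
  have mem : ∀ n ∈ Gaps RR, n ∈ [1, 2, 3, 5, 7, 9, 11, 15] := by
    intro n hn
    rw [mem_gaps] at hn
    simpa using hn
  exact triple_dec x (mem x hx) y (mem y hy) hxy z (mem z hz) hxz hyz

lemma flag_triple {m : ℕ} {D0 : Set ℕ} {g : ℕ → ℕ} (h : IsDFlag RR m D0 g) (i : ℕ) (hi1 : 1 ≤ i)
    (him : i + 2 ≤ m) :
    (g i = 1 ∧ g (i+1) = 2 ∧ g (i+2) = 3) ∨ (g i = 2 ∧ g (i+1) = 3 ∧ g (i+2) = 5) ∨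
    (g i = 2 ∧ g (i+1) = 5 ∧ g (i+2) = 7) ∨ (g i = 2 ∧ g (i+1) = 7 ∧ g (i+2) = 9) ∨
    (g i = 2 ∧ g (i+1) = 9 ∧ g (i+2) = 11) :=
  triple (h.2.2.1 i hi1 (by omega)).1 (h.2.2.1 (i+1) (by omega) (by omega)).1
    (h.2.2.1 (i+2) (by omega) him).1 (flag_inc h hi1 (by omega) (by omega))
    (flag_inc h hi1 (by omega) him) (flag_inc h (by omega) (by omega) him)

lemma no_four {D0 : Set ℕ} {g : ℕ → ℕ} (h : IsDFlag RR 4 D0 g) : False := by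
  have h1 := flag_triple h 1 (by omega) (by omega)
  have h2 := flag_triple h 2 (by omega) (by omega)
  have h3 := (flag_inc h (i := 1) (j := 4) (by omega) (by omega) (by omega)).2.1
  simp only [Nat.reduceAdd] at h1 h2
  omega

/-- No module realizes `D_1` when `g_1 = 2` and `7, 9` are missing from `D_0`. -/
lemma bad {D0 : Set ℕ} {g : ℕ → ℕ} (h1 : g 1 = 2) (h7 : 7 ∉ D0) (h9 : 9 ∉ D0)
    (h : IsAdmissibleFlag RR 3 D0 g) : False := by
  obtain ⟨MM, -, hM⟩ := h
  obtain ⟨hstd, hD⟩ := hM 1 (by omega)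
  have hmem : ∀ n, n ∈ DFlagSet D0 g 1 ↔ (n ∈ D0 ∨ n = 2) := by
    intro n
    rw [flag_mem h1 rfl rfl (by omega)]
    simp
  refine key hstd ?_ ?_ ?_
  · rw [hD, hmem]; simp
  · rw [hD, hmem]; simp [h7]
  · rw [hD, hmem]; simp [h9]

lemma forward {D0 : Set ℕ} {g : ℕ → ℕ} (h : IsDFlag RR 3 D0 g)
    (hadm : IsAdmissibleFlag RR 3 D0 g) :
    ((D0 = ({9, 11, 15} : Set ℕ) ∧ g 1 = 2 ∧ g 2 = 5 ∧ g 3 = 7) ∨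
     (D0 = ({7, 9, 11, 15} : Set ℕ) ∧ g 1 = 2 ∧ g 2 = 3 ∧ g 3 = 5) ∨
     (D0 = ({5, 7, 9, 11, 15} : Set ℕ) ∧ g 1 = 1 ∧ g 2 = 2 ∧ g 3 = 3)) := by
  have up1 := fun a => flag_up h (i := 1) (by omega) (by omega) (a := a)
  have up2 := fun a => flag_up h (i := 2) (by omega) (by omega) (a := a)
  have up3 := fun a => flag_up h (i := 3) (by omega) (by omega) (a := a)
  have n1 := (h.2.2.1 1 (by omega) (by omega)).2
  have n2 := (h.2.2.1 2 (by omega) (by omega)).2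
  have n3 := (h.2.2.1 3 (by omega) (by omega)).2
  have up0 := fun d a => flag_up0 h (d := d) (a := a)
  have hG : ∀ n ∈ D0, n = 1 ∨ n = 2 ∨ n = 3 ∨ n = 5 ∨ n = 7 ∨ n = 9 ∨ n = 11 ∨ n = 15 :=
    fun n hn => (mem_gaps n).1 (h.1 hn)
  have ht := flag_triple h 1 (by omega) (by omega)
  simp only [Nat.reduceAdd] at ht
  simp only [mem_gamma, mem_gaps] at up1 up2 up3 up0
  rcases ht with ⟨e1, e2, e3⟩ | ⟨e1, e2, e3⟩ | ⟨e1, e2, e3⟩ | ⟨e1, e2, e3⟩ | ⟨e1, e2, e3⟩ <;>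
    rw [e1] at n1 up1 <;> rw [e2] at n2 up2 <;> rw [e3] at n3 up3
  · refine Or.inr (Or.inr ⟨?_, e1, e2, e3⟩)
    ext n
    simp only [Set.mem_insert_iff, Set.mem_singleton_iff]
    constructor
    · intro hn
      rcases hG n hn with rfl | rfl | rfl | hh
      · exact absurd hn n1
      · exact absurd hn n2
      · exact absurd hn n3
      · exact hh
    · rintro (rfl | rfl | rfl | rfl | rfl)
      · exact up1 4 (by omega) (by omega) (by omega)
      · exact up1 6 (by omega) (by omega) (by omega)
      · exact up1 8 (by omega) (by omega) (by omega)
      · exact up1 10 (by omega) (by omega) (by omega)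
      · exact up1 14 (by omega) (by omega) (by omega)
  · refine Or.inr (Or.inl ⟨?_, e1, e2, e3⟩)
    ext n
    simp only [Set.mem_insert_iff, Set.mem_singleton_iff]
    constructor
    · intro hn
      rcases hG n hn with rfl | rfl | rfl | rfl | hh
      · exact absurd (up0 1 4 hn (by omega) (by omega)) n3
      · exact absurd hn n1
      · exact absurd hn n2
      · exact absurd hn n3
      · exact hh
    · rintro (rfl | rfl | rfl | rfl)
      · exact up2 4 (by omega) (by omega) (by omega)
      · exact up2 6 (by omega) (by omega) (by omega)
      · exact up2 8 (by omega) (by omega) (by omega)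
      · exact up2 12 (by omega) (by omega) (by omega)
  · refine Or.inl ⟨?_, e1, e2, e3⟩
    ext n
    simp only [Set.mem_insert_iff, Set.mem_singleton_iff]
    constructor
    · intro hn
      rcases hG n hn with rfl | rfl | rfl | rfl | rfl | hh
      · exact absurd (up0 1 4 hn (by omega) (by omega)) n2
      · exact absurd hn n1
      · exact absurd (up0 3 4 hn (by omega) (by omega)) n3
      · exact absurd hn n2
      · exact absurd hn n3
      · exact hh
    · rintro (rfl | rfl | rfl)
      · exact up2 4 (by omega) (by omega) (by omega)
      · exact up2 6 (by omega) (by omega) (by omega)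
      · exact up2 10 (by omega) (by omega) (by omega)
  · exact (bad e1 n2 n3 hadm).elim
  · refine (bad e1 (fun h7 => n3 ?_) n2 hadm).elim
    exact up0 7 4 h7 (by omega) (by omega)

/-- For `ℛ = ℂ[z^4, z^6+z^7] + z^{16}ℂ⟦z⟧`: the admissible `D`-flags of length 3
are exactly `D_0 = {9,11,15}, (g_1,g_2,g_3) = (2,5,7)`;
`D_0 = {7,9,11,15}, (g_1,g_2,g_3) = (2,3,5)`; and
`D_0 = {5,7,9,11,15}, (g_1,g_2,g_3) = (1,2,3)`. Moreover there is no admissible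
`D`-flag of length 4. -/
theorem statement18 :
    (∀ (D0 : Set ℕ) (g : ℕ → ℕ),
      (IsDFlag (Rring 4 6 7 16) 3 D0 g ∧ IsAdmissibleFlag (Rring 4 6 7 16) 3 D0 g) ↔
        ((D0 = ({9, 11, 15} : Set ℕ) ∧ g 1 = 2 ∧ g 2 = 5 ∧ g 3 = 7) ∨
         (D0 = ({7, 9, 11, 15} : Set ℕ) ∧ g 1 = 2 ∧ g 2 = 3 ∧ g 3 = 5) ∨
         (D0 = ({5, 7, 9, 11, 15} : Set ℕ) ∧ g 1 = 1 ∧ g 2 = 2 ∧ g 3 = 3))) ∧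
    (∀ (D0 : Set ℕ) (g : ℕ → ℕ),
      ¬ (IsDFlag (Rring 4 6 7 16) 4 D0 g ∧ IsAdmissibleFlag (Rring 4 6 7 16) 4 D0 g)) := by
  refine ⟨fun D0 g => ⟨fun h => forward h.1 h.2, ?_⟩, fun D0 g h => no_four h.1⟩
  rintro (⟨rfl, h1, h2, h3⟩ | ⟨rfl, h1, h2, h3⟩ | ⟨rfl, h1, h2, h3⟩)
  · exact flag_case1 g h1 h2 h3
  · exact flag_case2 g h1 h2 h3
  · exact flag_case3 g h1 h2 h3

end
end
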